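/- Let F be a field other than the two-element field (i.e. F contains an element x with x ≠ 0 and x ≠ 1). For every n ≥ 1, the stabilization map GL_n(F) → GL_{n+1}(F), A ↦ diag(A,1), induces an isomorphism H_d(GL_n(F); ℤ) → H_d(GL_{n+1}(F); ℤ) for all d ≤ n − 1, and a surjection for d = n. -/

import Mathlib

/-! # Group homology via the inhomogeneous bar complex (trivial coefficients) -/

namespace GroupHomologyBar

variable (G : Type) [Group G] (A : Type) [AddCommGroup A]

/-- Inhomogeneous `n`-chains of `G` with coefficients in `A`. -/
abbrev chains (n : ℕ) : Type := (Fin n → G) →₀ A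

/-- The differential of the inhomogeneous bar complex with trivial `G`-action on the
coefficients, sending `[g₁|…|g_{n+1}] ⊗ a` to
`[g₂|…|g_{n+1}] ⊗ a + ∑ⱼ (-1)^{j+1} [g₁|…|gⱼg_{j+1}|…|g_{n+1}] ⊗ a`
(the last summand of the sum being `(-1)^{n+1} [g₁|…|g_n] ⊗ a`). -/
noncomputable def d (n : ℕ) : chains G A (n + 1) →ₗ[ℤ] chains G A n :=
  Finsupp.lsum ℤ fun g =>
    (Finsupp.lsingle (Fin.tail g) : A →ₗ[ℤ] chains G A n)
      + ∑ j : Fin (n + 1),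
          ((-1 : ℤ) ^ ((j : ℕ) + 1)) • Finsupp.lsingle (Fin.contractNth j (· * ·) g)

/-- The `n`-cycles. -/
noncomputable def cycles : (n : ℕ) → Submodule ℤ (chains G A n)
  | 0 => ⊤
  | (n + 1) => LinearMap.ker (d G A n)

/-- The `n`-boundaries, viewed as a submodule of the `n`-cycles. -/
noncomputable def boundaries (n : ℕ) : Submodule ℤ (cycles G A n) :=
  Submodule.comap (cycles G A n).subtype (LinearMap.range (d G A n))

/-- The group homology `H_n(G; A)` of `G` with trivial coefficients in `A`. -/
abbrev Homology (n : ℕ) : Type := cycles G A n ⧸ boundaries G A n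

variable {G}
variable {G' : Type} [Group G']

/-- The map on chains induced by a group homomorphism. -/
noncomputable def chainsMap (φ : G →* G') (n : ℕ) : chains G A n →ₗ[ℤ] chains G' A n :=
  Finsupp.lmapDomain A ℤ fun v => φ ∘ v

lemma chainsMap_single (φ : G →* G') {n : ℕ} (v : Fin n → G) (a : A) :
    chainsMap A φ n (Finsupp.single v a) = Finsupp.single (φ ∘ v) a := by
  simp [chainsMap, Finsupp.mapDomain_single]

lemma d_single {n : ℕ} (g : Fin (n + 1) → G) (a : A) :
    d G A n (Finsupp.single g a)
      = Finsupp.single (Fin.tail g) a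
        + ∑ j : Fin (n + 1),
            ((-1 : ℤ) ^ ((j : ℕ) + 1)) • Finsupp.single (Fin.contractNth j (· * ·) g) a := by
  simp [d, Finsupp.lsum_single]

lemma d_chainsMap (φ : G →* G') (n : ℕ) :
    (d G' A n).comp (chainsMap A φ (n + 1)) = (chainsMap A φ n).comp (d G A n) := by
  apply Finsupp.lhom_ext
  intro g a
  have hc : ∀ j : Fin (n + 1),
      φ ∘ Fin.contractNth j (· * ·) g = Fin.contractNth j (· * ·) (φ ∘ g) := by
    intro j
    funext k
    simp only [Function.comp_apply, Fin.contractNth]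
    split_ifs <;> simp
  simp only [LinearMap.comp_apply, chainsMap_single, d_single, map_add, map_sum, map_smul,
    chainsMap_single, Fin.comp_tail, hc]

lemma chainsMap_mem_cycles (φ : G →* G') (n : ℕ) :
    ∀ x ∈ cycles G A n, chainsMap A φ n x ∈ cycles G' A n := by
  intro x hx
  cases n with
  | zero => trivial
  | succ n =>
    simp only [cycles, LinearMap.mem_ker] at hx ⊢
    have := congrArg (fun L : chains G A (n + 1) →ₗ[ℤ] chains G' A n => L x) (d_chainsMap A φ n)
    simp only [LinearMap.comp_apply] at this
    rw [this, hx, map_zero]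

/-- The map on cycles induced by a group homomorphism. -/
noncomputable def cyclesMap (φ : G →* G') (n : ℕ) : cycles G A n →ₗ[ℤ] cycles G' A n :=
  (chainsMap A φ n).restrict (chainsMap_mem_cycles A φ n)

/-- The map `H_n(G; A) → H_n(G'; A)` on group homology induced by a group
homomorphism `φ : G →* G'`. -/
noncomputable def inducedMap (φ : G →* G') (n : ℕ) :
    Homology G A n →ₗ[ℤ] Homology G' A n :=
  Submodule.mapQ _ _ (cyclesMap A φ n) (by
    rintro ⟨x, hx⟩ hmem
    simp only [boundaries, Submodule.mem_comap, Submodule.subtype_apply,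
      LinearMap.mem_range] at hmem ⊢
    obtain ⟨y, hy⟩ := hmem
    refine ⟨chainsMap A φ (n + 1) y, ?_⟩
    have := congrArg (fun L : chains G A (n + 1) →ₗ[ℤ] chains G' A n => L y) (d_chainsMap A φ n)
    simp only [LinearMap.comp_apply] at this
    rw [this, hy]
    rfl)

end GroupHomologyBar

/-- The block-sum monoid homomorphism `A ↦ diag(A, 1)` on square matrices. -/
noncomputable def diagBlockHom (F : Type) [Field F] (n : ℕ) :
    Matrix (Fin n) (Fin n) F →* Matrix (Fin (n + 1)) (Fin (n + 1)) F :=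
  ((Matrix.reindexAlgEquiv F F (finSumFinEquiv : Fin n ⊕ Fin 1 ≃ Fin (n + 1))).toRingEquiv.toMonoidHom).comp
    { toFun := fun A => Matrix.fromBlocks A 0 0 (1 : Matrix (Fin 1) (Fin 1) F)
      map_one' := Matrix.fromBlocks_one
      map_mul' := fun A B => by
        rw [Matrix.fromBlocks_multiply]
        simp }

/-- The stabilization homomorphism `GL_n(F) → GL_{n+1}(F)`, `A ↦ diag(A, 1)`. -/
noncomputable def glStab (F : Type) [Field F] (n : ℕ) :
    GL (Fin n) F →* GL (Fin (n + 1)) F :=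
  Units.map (diagBlockHom F n)

/-!
For subspaces `U` and `K` of `W`, let `relGL U K` be the group of automorphisms of `W` that are the
identity on `U` and on `W ⧸ K`. If `F ^ (n + 1) = V ⊕ T` with `T` the last coordinate line, then
`GL_n → GL_{n+1}` is the composite of `relGL T V ≤ relGL T ⊤` and `relGL T ⊤ ≤ relGL ⊥ ⊤`. More
generally, `relGL T V ≤ relGL U K` is connected up to degree `dim V` whenever `W = V ⊕ T`, `U ≤ T`,
`V ≤ K` and `K ⊓ T ≤ U`; this goes by strong induction on `dim V`.

The inclusion `relGL (U ⊔ F ∙ w) K ≤ relGL U K` is that of the stabilizer of a one-letter word in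
the complex of words with letters in a coset `t + K` that are independent modulo `U`. This complex
is acyclic in a range, and `relGL U K` acts transitively on its words of each length, with
stabilizers of the same type. Joining words with the boundary of a triangle of three coplanar
letters, pairwise independent modulo `U`, maps the complex of a smaller group into the complex of
`relGL U K`. The three joins of a given word are exchanged by elements that centralize the smaller
group, so their alternating sum acts on homology as a single one, and is highly connected by
induction. Hence so is the induced map on boundaries; as the smaller complex has no boundaries in
the lowest degree, the homology of the boundaries of two-letter words vanishes in a range, which
gives the stabilization by `w` its connectivity.

For `t ∉ U ⊔ K` the triangle is `t, t + f, t + μ f`, which needs `μ ≠ 0, 1`. Vectors of this kind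
enlarge `U` to `T`; the contragredient representation exchanges the roles of `U` and `K` and reduces
what remains to an equality of groups.
-/

namespace GLStability

open CategoryTheory Limits HomologicalComplex groupHomology Module
open scoped ZeroObject

universe v u

section Connectivity

variable {C : Type u} [Category.{v} C] [Abelian C] {K L M : ChainComplex C ℕ}

/-- A chain map is homologically `m`-connected when it is an isomorphism on homology below
degree `m` and an epimorphism in degree `m`. -/
def IsHomologyConnected (φ : K ⟶ L) (m : ℕ) : Prop :=
  (∀ n < m, IsIso (homologyMap φ n)) ∧ Epi (homologyMap φ m)

namespace IsHomologyConnected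

variable {φ φ' : K ⟶ L} {ψ : L ⟶ M} {m m' : ℕ}

lemma epi (h : IsHomologyConnected φ m) {n : ℕ} (hn : n ≤ m) : Epi (homologyMap φ n) := by
  rcases hn.lt_or_eq with hn | rfl
  · have := h.1 n hn
    infer_instance
  · exact h.2

lemma mono (h : IsHomologyConnected φ m) (hm : m' ≤ m) : IsHomologyConnected φ m' :=
  ⟨fun n hn => h.1 n (hn.trans_le hm), h.epi hm⟩

lemma of_isIso [IsIso φ] : IsHomologyConnected φ m :=
  ⟨fun _ _ => inferInstance, inferInstance⟩

lemma congr (h : IsHomologyConnected φ m) (hφ : ∀ n, homologyMap φ n = homologyMap φ' n) :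
    IsHomologyConnected φ' m :=
  ⟨fun n hn => hφ n ▸ h.1 n hn, hφ m ▸ h.2⟩

lemma comp (hφ : IsHomologyConnected φ m) (hψ : IsHomologyConnected ψ m) :
    IsHomologyConnected (φ ≫ ψ) m := by
  refine ⟨fun n hn => ?_, ?_⟩ <;> rw [homologyMap_comp]
  · have := hφ.1 n hn
    have := hψ.1 n hn
    infer_instance
  · have := hφ.2
    have := hψ.2
    infer_instance

lemma of_comp (hφ : IsHomologyConnected φ m) (h : IsHomologyConnected (φ ≫ ψ) m) :
    IsHomologyConnected ψ m := by
  refine ⟨fun n hn => ?_, ?_⟩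
  · have := hφ.1 n hn
    have := h.1 n hn
    rw [homologyMap_comp] at this
    exact IsIso.of_isIso_comp_left (homologyMap φ n) _
  · have := h.2
    rw [homologyMap_comp] at this
    exact epi_of_epi (homologyMap φ m) _

lemma of_comp_isIso [IsIso ψ] (h : IsHomologyConnected (φ ≫ ψ) m) : IsHomologyConnected φ m := by
  have := h.comp (of_isIso (φ := inv ψ))
  rwa [Category.assoc, IsIso.hom_inv_id, Category.comp_id] at this

lemma of_shortExact {S T : ShortComplex (ChainComplex C ℕ)} (τ : S ⟶ T) (hS : S.ShortExact)
    (hT : T.ShortExact) (h₂ : IsHomologyConnected τ.τ₂ m)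
    (h₁ : ∀ n, n + 1 = m → IsHomologyConnected τ.τ₁ n) : IsHomologyConnected τ.τ₃ m := by
  have hrel : ∀ {i j : ℕ}, (ComplexShape.down ℕ).Rel i j → j + 1 = i := id
  refine ⟨fun n hn => ?_, ?_⟩
  · obtain ⟨m, rfl⟩ := Nat.exists_eq_add_of_lt hn
    have h₁ := h₁ (n + m) rfl
    refine HomologySequence.isIso_homologyMap_τ₃ τ hS hT n (h₁.epi (by lia)) (h₂.1 n hn)
      (fun j hj => h₁.1 j ?_) (fun j hj => ?_)
    · have := hrel hj
      lia
    · have := h₂.1 j (by have := hrel hj; lia)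
      infer_instance
  · refine HomologySequence.epi_homologyMap_τ₃ τ hS hT m h₂.2
      (fun j hj => (h₁ j (hrel hj)).2) (fun j hj => ?_)
    have := h₂.1 j (by have := hrel hj; lia)
    infer_instance

lemma of_isZero_homology {S : ShortComplex (ChainComplex C ℕ)} (hS : S.ShortExact)
    (h : ∀ n ≤ m, IsZero (S.X₁.homology n)) : IsHomologyConnected S.g (m + 1) := by
  let S' : ShortComplex (ChainComplex C ℕ) := .mk (0 : 0 ⟶ S.X₂) (𝟙 S.X₂) zero_comp
  have hS' : S'.ShortExact := (ShortComplex.Splitting.ofIsZeroOfIsIso S' (isZero_zero _)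
    inferInstance).shortExact
  let τ : S' ⟶ S := ⟨0, 𝟙 S.X₂, S.g, by simp [S'], by simp [S']⟩
  have hzero (n : ℕ) : IsZero (S'.X₁.homology n) :=
    (homologyFunctor C (.down ℕ) n).map_isZero (isZero_zero _)
  refine of_shortExact τ hS' hS (of_isIso (φ := 𝟙 S.X₂)) fun n hn => ?_
  obtain rfl : m = n := by lia
  have hiso (n : ℕ) (hn : n ≤ m) : IsIso (homologyMap τ.τ₁ n) :=
    (hzero n).isIso (h n hn) _
  have := hiso m le_rfl
  exact ⟨fun n hn => hiso n hn.le, inferInstance⟩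

end IsHomologyConnected

end Connectivity

section GroupHomology

variable {k : Type u} [CommRing k] {G H : Type u} [Group G] [Group H]

lemma shortExact_of_exact {S : ShortComplex (Rep.{u} k G)} (hf : Function.Injective S.f.hom)
    (hfg : Function.Exact S.f.hom S.g.hom) (hg : Function.Surjective S.g.hom) :
    S.ShortExact where
  exact := by
    rw [← S.exact_map_iff_of_faithful (forget₂ (Rep.{u} k G) (ModuleCat k)),
      ShortComplex.ShortExact.moduleCat_exact_iff_function_exact]
    exact hfg
  mono_f := (Rep.mono_iff_injective _).2 hf
  epi_g := (Rep.epi_iff_surjective _).2 hg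

lemma chainsFunctor_map_comp_chainsMap {A A' : Rep.{u} k G} {B B' : Rep.{u} k H} (f : G →* H)
    {α : A ⟶ A'} {β : B ⟶ B'} {φ : A ⟶ Rep.res f B} {φ' : A' ⟶ Rep.res f B'}
    (h : ∀ x, φ'.hom (α.hom x) = β.hom (φ.hom x)) :
    (chainsFunctor k G).map α ≫ chainsMap f φ' = chainsMap f φ ≫ (chainsFunctor k H).map β := by
  change chainsMap (MonoidHom.id G) α ≫ chainsMap f φ' =
    chainsMap f φ ≫ chainsMap (MonoidHom.id H) β
  rw [← chainsMap_comp, ← chainsMap_comp]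
  exact chainsMap_congr rfl (LinearMap.ext h)

lemma chainsMap_comp_chainsFunctor_map {A : Rep.{u} k G} {B B' : Rep.{u} k H} (f : G →* H)
    {β : B ⟶ B'} {φ : A ⟶ Rep.res f B} {φ' : A ⟶ Rep.res f B'}
    (h : ∀ x, φ'.hom x = β.hom (φ.hom x)) :
    chainsMap f φ ≫ (chainsFunctor k H).map β = chainsMap f φ' := by
  change chainsMap f φ ≫ chainsMap (MonoidHom.id H) β = chainsMap f φ'
  rw [← chainsMap_comp]
  exact chainsMap_congr rfl (LinearMap.ext fun x => (h x).symm)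

/-- The short complexes of chains of two short complexes of representations, over two groups,
are related by any compatible triple of maps. -/
noncomputable def chainsShortComplexMap {S : ShortComplex (Rep.{u} k G)}
    {T : ShortComplex (Rep.{u} k H)} (f : G →* H) (φ₁ : S.X₁ ⟶ Rep.res f T.X₁)
    (φ₂ : S.X₂ ⟶ Rep.res f T.X₂) (φ₃ : S.X₃ ⟶ Rep.res f T.X₃)
    (h₁₂ : ∀ x, T.f.hom (φ₁.hom x) = φ₂.hom (S.f.hom x))
    (h₂₃ : ∀ x, T.g.hom (φ₂.hom x) = φ₃.hom (S.g.hom x)) :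
    S.map (chainsFunctor k G) ⟶ T.map (chainsFunctor k H) where
  τ₁ := chainsMap f φ₁
  τ₂ := chainsMap f φ₂
  τ₃ := chainsMap f φ₃
  comm₁₂ := (chainsFunctor_map_comp_chainsMap f fun x => (h₁₂ x).symm).symm
  comm₂₃ := (chainsFunctor_map_comp_chainsMap f fun x => (h₂₃ x).symm).symm

lemma isHomologyConnected_of_shortExact {S : ShortComplex (Rep.{u} k G)}
    {T : ShortComplex (Rep.{u} k H)} (hS : S.ShortExact) (hT : T.ShortExact)
    (f : G →* H) {φ₁ : S.X₁ ⟶ Rep.res f T.X₁} {φ₂ : S.X₂ ⟶ Rep.res f T.X₂}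
    {φ₃ : S.X₃ ⟶ Rep.res f T.X₃} (h₁₂ : ∀ x, T.f.hom (φ₁.hom x) = φ₂.hom (S.f.hom x))
    (h₂₃ : ∀ x, T.g.hom (φ₂.hom x) = φ₃.hom (S.g.hom x)) {m : ℕ}
    (h₂ : IsHomologyConnected (chainsMap f φ₂) m)
    (h₁ : ∀ n, n + 1 = m → IsHomologyConnected (chainsMap f φ₁) n) :
    IsHomologyConnected (chainsMap f φ₃) m :=
  IsHomologyConnected.of_shortExact (chainsShortComplexMap f φ₁ φ₂ φ₃ h₁₂ h₂₃)
    (map_chainsFunctor_shortExact hS) (map_chainsFunctor_shortExact hT) h₂ h₁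

section PermTensor

/-- The diagonal action of `G` on `k[X] ⊗ V`, realised on finitely supported functions
`X →₀ V`. -/
noncomputable def permTensorRepresentation (X : Type u) [MulAction G X] {V : Type u}
    [AddCommGroup V] [Module k V] (ρ : Representation k G V) : Representation k G (X →₀ V) where
  toFun g := Finsupp.mapRange.linearMap (ρ g) ∘ₗ Finsupp.lmapDomain V k (g • ·)
  map_one' := Finsupp.lhom_ext fun x a => by simp
  map_mul' g h := Finsupp.lhom_ext fun x a => by simp [mul_smul]

lemma permTensorRepresentation_single {X : Type u} [MulAction G X] {V : Type u}
    [AddCommGroup V] [Module k V] (ρ : Representation k G V) (g : G) (x : X) (a : V) :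
    permTensorRepresentation X ρ g (Finsupp.single x a) = Finsupp.single (g • x) (ρ g a) := by
  change Finsupp.mapRange.linearMap (ρ g) (Finsupp.lmapDomain V k (g • ·) _) = _
  simp

variable (k) in
/-- The linear map `k[X] ⊗ V → V` summing the values of a finitely supported function. -/
noncomputable def augmentation (X V : Type u) [AddCommGroup V] [Module k V] : (X →₀ V) →ₗ[k] V :=
  Finsupp.lsum k fun _ => LinearMap.id

@[simp]
lemma augmentation_single {X V : Type u} [AddCommGroup V] [Module k V] (x : X) (a : V) :
    augmentation k X V (Finsupp.single x a) = a := by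
  simp [augmentation]

variable (X : Type u) [MulAction G X] (A : Rep.{u} k G)

/-- The representation `k[X] ⊗ A`. -/
noncomputable abbrev permTensor : Rep.{u} k G :=
  Rep.of (permTensorRepresentation X A.ρ)

/-- The functoriality of `k[X] ⊗ A` in `A`. -/
noncomputable def permTensorMap {A B : Rep.{u} k G} (φ : A ⟶ B) : permTensor X A ⟶ permTensor X B :=
  Rep.ofHom ⟨Finsupp.mapRange.linearMap φ.hom.toLinearMap, fun g =>
    Finsupp.lhom_ext fun x a => by
      simp [permTensorRepresentation_single, Rep.hom_comm_apply φ]⟩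

/-- The augmentation `k[X] ⊗ A ⟶ A`. -/
noncomputable def permTensorAugmentation : permTensor X A ⟶ A :=
  Rep.ofHom ⟨augmentation k X A, fun g =>
    Finsupp.lhom_ext fun x a => by simp [permTensorRepresentation_single]⟩

variable {X A}

lemma permTensorMap_single {A B : Rep.{u} k G} (φ : A ⟶ B) (x : X) (a : A) :
    (permTensorMap X φ).hom (Finsupp.single x a) = Finsupp.single x (φ.hom a) := by
  change Finsupp.mapRange.linearMap φ.hom.toLinearMap _ = _
  simp

variable (X A) in
/-- The short complex `0 ⟶ ker ε ⟶ k[X] ⊗ A ⟶ A ⟶ 0` of the augmentation `ε`. -/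
noncomputable def augmentationShortComplex : ShortComplex (Rep.{u} k G) :=
  ShortComplex.mk (Limits.kernel.ι (permTensorAugmentation X A)) (permTensorAugmentation X A)
    (Limits.kernel.condition _)

lemma augmentationShortComplex_shortExact [Nonempty X] :
    (augmentationShortComplex X A).ShortExact where
  exact := ShortComplex.exact_of_f_is_kernel _ (Limits.kernelIsKernel _)
  mono_f := Limits.equalizer.ι_mono (f := permTensorAugmentation X A) (g := 0)
  epi_g := (Rep.epi_iff_surjective _).2 fun a =>
    ⟨Finsupp.single (Classical.arbitrary X) a, augmentation_single _ a⟩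

variable (X) in
/-- The short complex `k[X] ⊗ S`. -/
noncomputable def permTensorShortComplex (S : ShortComplex (Rep.{u} k G)) :
    ShortComplex (Rep.{u} k G) :=
  ShortComplex.mk (permTensorMap X S.f) (permTensorMap X S.g) <| by
    refine Rep.hom_ext (Representation.IntertwiningMap.ext (Finsupp.lhom_ext fun x a => ?_))
    have : S.g.hom (S.f.hom a) = 0 := congrArg (fun φ => φ.hom a) S.zero
    change (permTensorMap X S.g).hom ((permTensorMap X S.f).hom _) = 0
    rw [permTensorMap_single, permTensorMap_single, this, Finsupp.single_zero]

lemma permTensorShortComplex_shortExact {S : ShortComplex (Rep.{u} k G)} (hS : S.ShortExact) :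
    (permTensorShortComplex X S).ShortExact := by
  have hf : Function.Injective S.f.hom := (Rep.mono_iff_injective _).1 hS.mono_f
  have hg : Function.Surjective S.g.hom := (Rep.epi_iff_surjective _).1 hS.epi_g
  have hfg : Function.Exact S.f.hom.toLinearMap S.g.hom.toLinearMap :=
    (ShortComplex.ShortExact.moduleCat_exact_iff_function_exact _).1
      (hS.exact.map (forget₂ (Rep.{u} k G) (ModuleCat k)))
  refine shortExact_of_exact (Finsupp.mapRange_injective _ (map_zero _) hf) ?_
    (Finsupp.mapRange_surjective _ (map_zero _) hg)
  have : Function.Exact (Finsupp.mapRange.linearMap (α := X) S.f.hom.toLinearMap)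
      (Finsupp.mapRange.linearMap S.g.hom.toLinearMap) := by
    rw [LinearMap.exact_iff, Finsupp.ker_mapRange,
      Finsupp.range_mapRange_linearMap _ (LinearMap.ker_eq_bot.2 hf), hfg.linearMap_ker_eq]
  exact this

end PermTensor

section Acyclicity

variable {A : Rep.{u} k G}

/-- The map `h ⊗ a ↦ h⁻¹a ⊗ [h⁻¹ | v]`, which composed with a section of the augmentation
`k[G] ⊗ A ⟶ A` contracts the inhomogeneous chains of `A`. -/
noncomputable def prependInv (A : Rep.{u} k G) {n : ℕ} (v : Fin n → G) :
    (G →₀ A) →ₗ[k] (Fin (n + 1) → G) →₀ A :=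
  Finsupp.lsum k fun h => Finsupp.lsingle (Fin.cons h⁻¹ v) ∘ₗ A.ρ h⁻¹

lemma prependInv_single {n : ℕ} (v : Fin n → G) (h : G) (a : A) :
    prependInv A v (Finsupp.single h a) = Finsupp.single (Fin.cons h⁻¹ v) (A.ρ h⁻¹ a) := by
  simp [prependInv]

lemma contractNth_zero_cons {n : ℕ} (h : G) (v : Fin (n + 1) → G) :
    Fin.contractNth 0 (· * ·) (Fin.cons h v : Fin (n + 2) → G) =
      Fin.cons (h * v 0) fun i => v i.succ := by
  ext i
  refine Fin.cases ?_ (fun i => ?_) i <;> simp [Fin.contractNth]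

lemma contractNth_succ_cons {n : ℕ} (j : Fin (n + 1)) (h : G) (v : Fin (n + 1) → G) :
    Fin.contractNth j.succ (· * ·) (Fin.cons h v : Fin (n + 2) → G) =
      Fin.cons h (Fin.contractNth j (· * ·) v) := by
  ext i
  refine Fin.cases ?_ (fun i => ?_) i <;> simp [Fin.contractNth]

lemma d_prependInv {n : ℕ} (v : Fin (n + 1) → G) (t : G →₀ A) :
    inhomogeneousChains.d A (n + 1) (prependInv A v t) =
      Finsupp.single v (augmentation k G A t) -
        (prependInv A (fun i => v i.succ) (permTensorRepresentation G A.ρ (v 0)⁻¹ t) +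
          ∑ j : Fin (n + 1), (-1 : k) ^ ((j : ℕ) + 1) •
            prependInv A (Fin.contractNth j (· * ·) v) t) := by
  induction t using Finsupp.induction_linear with
  | zero => simp
  | add s t hs ht =>
    simp only [map_add, hs, ht, Finsupp.single_add, smul_add, Finset.sum_add_distrib]
    abel
  | single h a =>
    rw [prependInv_single, inhomogeneousChains.d_single, augmentation_single,
      Fin.sum_univ_succ, contractNth_zero_cons]
    simp only [permTensorRepresentation_single, prependInv_single, contractNth_succ_cons]
    simp only [Fin.cons_zero, Fin.cons_succ, inv_inv, Representation.self_inv_apply, Fin.val_zero,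
      zero_add, pow_zero, neg_smul, one_smul, mul_inv_rev, smul_eq_mul, Fin.val_succ, pow_succ,
      mul_neg, mul_one, Finset.sum_neg_distrib, map_mul, Module.End.mul_apply, neg_neg]
    abel

/-- A representation is relatively projective when the augmentation `k[G] ⊗ A ⟶ A` has an
equivariant section. -/
def IsRelativelyProjective (A : Rep.{u} k G) : Prop :=
  ∃ θ : A →ₗ[k] G →₀ A, (∀ g a, θ (A.ρ g a) = permTensorRepresentation G A.ρ g (θ a)) ∧
    ∀ a, augmentation k G A (θ a) = a

lemma IsRelativelyProjective.isZero_groupHomology_succ (hA : IsRelativelyProjective A) (n : ℕ) :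
    Limits.IsZero (groupHomology A (n + 1)) := by
  obtain ⟨θ, hθ_smul, hθ⟩ := hA
  let s (n : ℕ) : ((Fin n → G) →₀ A) →ₗ[k] (Fin (n + 1) → G) →₀ A :=
    Finsupp.lsum k fun v => prependInv A v ∘ₗ θ
  have s_single (n : ℕ) (v : Fin n → G) (a : A) :
      s n (Finsupp.single v a) = prependInv A v (θ a) := by
    simp [s]
  have d_s (x : (Fin (n + 1) → G) →₀ A) : inhomogeneousChains.d A (n + 1) (s (n + 1) x) =
      x - s n (inhomogeneousChains.d A n x) := by
    induction x using Finsupp.induction_linear with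
    | zero => simp
    | add x y hx hy => simp only [map_add, hx, hy]; abel
    | single v a =>
      rw [s_single, d_prependInv, hθ, inhomogeneousChains.d_single]
      simp only [map_add, map_sum, map_smul, s_single, hθ_smul]
  refine ExactAt.isZero_homology ((exactAt_iff' _ (n + 2) (n + 1) n (by simp) (by simp)).2 ?_)
  rw [ShortComplex.moduleCat_exact_iff]
  intro (x : (Fin (n + 1) → G) →₀ A) hx
  change (inhomogeneousChains A).d (n + 1) n x = 0 at hx
  rw [inhomogeneousChains.d_def] at hx
  refine ⟨s (n + 1) x, ?_⟩
  change (inhomogeneousChains A).d (n + 2) (n + 1) _ = x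
  rw [inhomogeneousChains.d_def]
  exact (d_s x).trans (by rw [hx, map_zero, sub_zero])

end Acyclicity

end GroupHomology

section Shapiro

variable {k : Type u} [CommRing k] {G H : Type u} [Group G] [Group H]

lemma isRelativelyProjective_permTensor_self (A : Rep.{u} k G) :
    IsRelativelyProjective (permTensor G A) := by
  let θ : (G →₀ A) →ₗ[k] G →₀ G →₀ A :=
    Finsupp.lsum k fun g => Finsupp.lsingle g ∘ₗ Finsupp.lsingle g
  have θ_single (g : G) (a : A) : θ (Finsupp.single g a) = .single g (.single g a) := by simp [θ]
  refine ⟨θ, fun g a => ?_, fun a => ?_⟩ <;> induction a using Finsupp.induction_linear with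
  | zero => simp
  | add a b ha hb => simp only [map_add, ha, hb]
  | single h a => simp [permTensorRepresentation_single, θ_single]

lemma IsRelativelyProjective.permTensor {A : Rep.{u} k G} (hA : IsRelativelyProjective A)
    (X : Type u) [MulAction G X] : IsRelativelyProjective (permTensor X A) := by
  obtain ⟨θ, hθ_smul, hθ⟩ := hA
  let place (x : X) : (G →₀ A) →ₗ[k] G →₀ X →₀ A := Finsupp.mapRange.linearMap (Finsupp.lsingle x)
  have place_smul (g : G) (x : X) (t : G →₀ A) :
      place (g • x) (permTensorRepresentation G A.ρ g t) =
        permTensorRepresentation G (permTensorRepresentation X A.ρ) g (place x t) := by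
    induction t using Finsupp.induction_linear with
    | zero => simp
    | add s t hs ht => simp only [map_add, hs, ht]
    | single h a => simp [permTensorRepresentation_single, place]
  have augmentation_place (x : X) (t : G →₀ A) :
      augmentation k G (X →₀ A) (place x t) = Finsupp.single x (augmentation k G A t) := by
    induction t using Finsupp.induction_linear with
    | zero => simp
    | add s t hs ht => simp only [map_add, hs, ht, Finsupp.single_add]
    | single h a => simp [place]
  let θX : (X →₀ A) →ₗ[k] G →₀ X →₀ A := Finsupp.lsum k fun x => place x ∘ₗ θ
  have θX_single (x : X) (a : A) : θX (Finsupp.single x a) = place x (θ a) := by simp [θX]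
  refine ⟨θX, fun g a => ?_, fun a => ?_⟩ <;> induction a using Finsupp.induction_linear with
  | zero => simp
  | add a b ha hb => simp only [map_add, ha, hb]
  | single x a =>
    simp [permTensorRepresentation_single, θX_single, hθ_smul, place_smul, augmentation_place, hθ]

lemma exists_equivariant_retraction {f : G →* H} (hf : Function.Injective f) :
    ∃ σ : H → G, ∀ g h, σ (f g * h) = g * σ h := by
  obtain ⟨T, hT, -⟩ := f.range.exists_isComplement_right 1
  refine ⟨fun h => (MonoidHom.ofInjective hf).symm (hT.equiv h).1, fun g h => ?_⟩
  dsimp only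
  rw [hT.equiv_mul_left_of_mem ⟨g, rfl⟩, map_mul]
  exact congrArg (· * _) ((MonoidHom.ofInjective hf).symm_apply_apply g)

lemma IsRelativelyProjective.res {A : Rep.{u} k H} (hA : IsRelativelyProjective A) {f : G →* H}
    (hf : Function.Injective f) : IsRelativelyProjective (Rep.res f A) := by
  obtain ⟨θ, hθ_smul, hθ⟩ := hA
  obtain ⟨σ, hσ⟩ := exists_equivariant_retraction hf
  let push : (H →₀ A) →ₗ[k] G →₀ A := Finsupp.lmapDomain A k σ
  have push_smul (g : G) (t : H →₀ A) :
      push (permTensorRepresentation H A.ρ (f g) t) =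
        permTensorRepresentation G (Rep.res f A).ρ g (push t) := by
    induction t using Finsupp.induction_linear with
    | zero => simp
    | add s t hs ht => simp only [map_add, hs, ht]
    | single h a => simp [permTensorRepresentation_single, push, hσ]
  have augmentation_push (t : H →₀ A) :
      augmentation k G A (push t) = augmentation k H A t := by
    induction t using Finsupp.induction_linear with
    | zero => simp
    | add s t hs ht => simp only [map_add, hs, ht]
    | single h a => simp [push]
  exact ⟨push ∘ₗ θ, fun g a => (congrArg push (hθ_smul (f g) a)).trans (push_smul g _),
    fun a => (augmentation_push _).trans (hθ a)⟩

lemma H0π_ρ_apply {A : Rep.{u} k G} (g : G) (a : A) : H0π A (A.ρ g a) = H0π A a := by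
  rw [← coinvariantsMk_comp_H0Iso_inv]
  exact congrArg (H0Iso A).inv (Representation.Coinvariants.mk_self_apply A.ρ g a)

lemma apply_eq_of_H0π_eq {A : Rep.{u} k G} {M : Type*} [AddCommGroup M] [Module k M]
    (p : A →ₗ[k] M) (hp : ∀ g a, p (A.ρ g a) = p a) {a b : A} (h : H0π A a = H0π A b) :
    p a = p b := by
  have := congrArg (H0Iso A).hom h
  rw [H0π_comp_H0Iso_hom_apply, H0π_comp_H0Iso_hom_apply] at this
  exact congrArg (Representation.Coinvariants.lift _ p fun g => LinearMap.ext (hp g)) this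

variable (A : Rep.{u} k G) (g : G)

/-- The action of `g` on `A`, intertwining the action with its conjugate by `g`. -/
noncomputable def conjMap : A ⟶ Rep.res (MulAut.conj g).toMonoidHom A :=
  Rep.ofHom ⟨A.ρ g, fun h => by
    ext a
    simp [← Module.End.mul_apply, ← map_mul]⟩

lemma map_conjMap (n : ℕ) : map (MulAut.conj g).toMonoidHom (conjMap A g) n = 𝟙 _ := by
  induction n generalizing A with
  | zero =>
    rw [← cancel_epi (H0π A), H0π_comp_map, Category.comp_id]
    refine ModuleCat.hom_ext (LinearMap.ext fun a => ?_)
    exact H0π_ρ_apply g a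
  | succ n ih =>
    have hS := augmentationShortComplex_shortExact (X := G) (A := A)
    have := mono_δ_of_isZero hS n
      ((isRelativelyProjective_permTensor_self A).isZero_groupHomology_succ n)
    have naturality := HomologySequence.δ_naturality
      (chainsShortComplexMap (S := augmentationShortComplex G A)
        (T := augmentationShortComplex G A) (MulAut.conj g).toMonoidHom
        (conjMap _ g) (conjMap _ g) (conjMap _ g) (fun _ => Rep.hom_comm_apply _ _ _)
        (fun _ => Rep.hom_comm_apply _ _ _))
      (map_chainsFunctor_shortExact hS) (map_chainsFunctor_shortExact hS) (n + 1) n rfl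
    refine (cancel_mono (δ hS (n + 1) n rfl)).1 (naturality.symm.trans ?_)
    change _ ≫ map _ (conjMap _ g) n = 𝟙 _ ≫ _
    rw [ih]
    exact (Category.comp_id _).trans (Category.id_comp _).symm

section PointInclusion

variable {X : Type u} [MulAction H X] (f : G →* H) (A : Rep.{u} k H) (x : X)

/-- The map `a ↦ x ⊗ a`, where `x` is fixed by `f(G)`. -/
noncomputable def pointInclusion (hx : ∀ g, f g • x = x) :
    Rep.res f A ⟶ Rep.res f (permTensor X A) :=
  Rep.ofHom ⟨Finsupp.lsingle x, fun g => LinearMap.ext fun a => by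
    simp [permTensorRepresentation_single, hx]⟩

variable {f x} (htrans : ∀ y : X, ∃ h : H, h • x = y)

include htrans in
lemma epi_map_pointInclusion_zero (hx : ∀ g, f g • x = x) :
    Epi (map f (pointInclusion f A x hx) 0) := by
  rw [ModuleCat.epi_iff_range_eq_top, eq_top_iff]
  intro z _
  induction z using H0_induction_on with
  | h t =>
    induction t using Finsupp.induction_linear with
    | zero => rw [map_zero]; exact zero_mem _
    | add s t hs ht => rw [map_add]; exact add_mem (hs trivial) (ht trivial)
    | single y a =>
      obtain ⟨h, rfl⟩ := htrans y
      refine ⟨H0π (Rep.res f A) (A.ρ h⁻¹ a), ?_⟩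
      refine (H0π_comp_map_apply f (pointInclusion f A x hx) _).trans ?_
      rw [← H0π_ρ_apply h]
      congr 1
      exact (permTensorRepresentation_single _ _ _ _).trans
        (by rw [Representation.self_inv_apply])

include htrans in
lemma mono_map_pointInclusion_zero (hx : ∀ h : H, h • x = x ↔ h ∈ f.range) :
    Mono (map f (pointInclusion f A x fun g => (hx _).2 ⟨g, rfl⟩) 0) := by
  choose τ hτ using htrans
  have cocycle (h : H) (y : X) : ∃ g, h⁻¹ * τ (h • y) = τ y * f g := by
    obtain ⟨g, hg⟩ := (hx ((τ y)⁻¹ * (h⁻¹ * τ (h • y)))).1 (by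
      rw [mul_smul, mul_smul, hτ, inv_smul_smul, inv_smul_eq_iff, hτ])
    exact ⟨g, by rw [hg, mul_inv_cancel_left]⟩
  let p : (X →₀ A) →ₗ[k] H0 (Rep.res f A) :=
    Finsupp.lsum k fun y => (H0π (Rep.res f A)).hom ∘ₗ A.ρ (τ y)⁻¹
  have p_single (y : X) (a : A) :
      p (Finsupp.single y a) = H0π (Rep.res f A) (A.ρ (τ y)⁻¹ a) := by
    simp [p]
  have p_smul (h : H) (t : X →₀ A) : p (permTensorRepresentation X A.ρ h t) = p t := by
    induction t using Finsupp.induction_linear with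
    | zero => simp
    | add s t hs ht => simp only [map_add, hs, ht]
    | single y a =>
      obtain ⟨g, hg⟩ := cocycle h y
      have : A.ρ (τ (h • y))⁻¹ (A.ρ h a) = (Rep.res f A).ρ g⁻¹ (A.ρ (τ y)⁻¹ a) := by
        change _ = A.ρ (f g⁻¹) _
        rw [← Module.End.mul_apply, ← Module.End.mul_apply, ← map_mul, ← map_mul, map_inv,
          ← mul_inv_rev, ← hg, mul_inv_rev, inv_inv]
      rw [permTensorRepresentation_single, p_single, p_single, this, H0π_ρ_apply]
  rw [ModuleCat.mono_iff_injective, injective_iff_map_eq_zero]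
  intro z hz
  induction z using H0_induction_on with
  | h a =>
    obtain ⟨g, hg⟩ := (hx (τ x)).1 (hτ x)
    have hxa : H0π (permTensor X A) (Finsupp.single x a) = H0π (permTensor X A) 0 :=
      ((H0π_comp_map_apply f (pointInclusion f A x _) a).symm.trans hz).trans (map_zero _).symm
    have := apply_eq_of_H0π_eq p p_smul hxa
    rw [p_single, map_zero, ← hg, ← map_inv] at this
    exact (H0π_ρ_apply (A := Rep.res f A) g⁻¹ a).symm.trans this

include htrans in
theorem isHomologyConnected_pointInclusion (hf : Function.Injective f)
    (hx : ∀ h : H, h • x = x ↔ h ∈ f.range) (m : ℕ) :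
    IsHomologyConnected (chainsMap f (pointInclusion f A x fun g => (hx _).2 ⟨g, rfl⟩)) m := by
  induction m generalizing A with
  | zero => exact ⟨fun n hn => (Nat.not_lt_zero n hn).elim, epi_map_pointInclusion_zero A htrans _⟩
  | succ m ih =>
    have hS := augmentationShortComplex_shortExact (X := H) (A := A)
    have hP := isRelativelyProjective_permTensor_self A
    have h₀ := epi_map_pointInclusion_zero (permTensor H A) htrans fun g => (hx _).2 ⟨g, rfl⟩
    have h₀' := mono_map_pointInclusion_zero (permTensor H A) htrans hx
    have hsucc (n : ℕ) : IsIso (map f (pointInclusion f (permTensor H A) x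
        fun g => (hx _).2 ⟨g, rfl⟩) (n + 1)) :=
      Limits.IsZero.isIso ((hP.res hf).isZero_groupHomology_succ n)
        ((hP.permTensor X).isZero_groupHomology_succ n) _
    have middle : IsHomologyConnected (chainsMap f (pointInclusion f (permTensor H A) x
        fun g => (hx _).2 ⟨g, rfl⟩)) (m + 1) := by
      refine ⟨fun n _ => ?_, @IsIso.epi_of_iso _ _ _ _ _ (hsucc m)⟩
      rcases n with - | n
      exacts [isIso_of_mono_of_epi (map f _ 0), hsucc n]
    exact isHomologyConnected_of_shortExact (hS.map_of_exact (Rep.resFunctor f))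
      (permTensorShortComplex_shortExact (X := X) hS) f (φ₁ := pointInclusion f _ x _)
      (φ₂ := pointInclusion f _ x _) (φ₃ := pointInclusion f _ x _)
      (fun _ => permTensorMap_single _ _ _) (fun _ => permTensorMap_single _ _ _) middle
      fun n hn => by
        obtain rfl : n = m := by lia
        exact ih _

end PointInclusion

end Shapiro

/-! ### Chains of words -/

section WordChains

variable {W W' : Type}

/-- Integral linear combinations of words in the alphabet `W`. -/
abbrev WordChain (W : Type) : Type := List W →₀ ℤ

/-- The map of word chains that puts the word `t` in front of every word. -/
noncomputable def prepend (t : List W) : WordChain W →ₗ[ℤ] WordChain W :=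
  Finsupp.lmapDomain ℤ ℤ (t ++ ·)

/-- The map of word chains induced by a map of alphabets. -/
noncomputable def mapLetters (g : W → W') : WordChain W →ₗ[ℤ] WordChain W' :=
  Finsupp.lmapDomain ℤ ℤ (List.map g)

/-- The alternating sum of the words obtained by deleting one letter of a word. -/
noncomputable def wordBoundary : List W → WordChain W
  | [] => 0
  | v :: l => .single l 1 - prepend [v] (wordBoundary l)

/-- The differential of the augmented complex whose `k`-chains are combinations of words of
length `k`; the word of length `0` spans the augmentation term. -/
noncomputable def boundary : WordChain W →ₗ[ℤ] WordChain W :=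
  Finsupp.linearCombination ℤ wordBoundary

/-- The alternating sum of the words obtained by deleting a letter of the prefix `t` after putting
`t` in front. -/
noncomputable def prefixFaces : List W → (WordChain W →ₗ[ℤ] WordChain W)
  | [] => 0
  | v :: t => prepend t - prepend [v] ∘ₗ prefixFaces t

/-- The word `t'` arises from `t` by deleting one letter. -/
def IsFace (t' t : List W) : Prop := t'.Sublist t ∧ t'.length + 1 = t.length

@[simp] lemma prepend_single (t l : List W) (n : ℤ) :
    prepend t (.single l n) = .single (t ++ l) n :=
  Finsupp.mapDomain_single

@[simp] lemma mapLetters_single (g : W → W') (l : List W) (n : ℤ) :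
    mapLetters g (.single l n) = .single (l.map g) n :=
  Finsupp.mapDomain_single

@[simp] lemma boundary_single (l : List W) (n : ℤ) :
    boundary (.single l n) = n • wordBoundary l :=
  Finsupp.linearCombination_single ..

lemma prepend_nil (x : WordChain W) : prepend [] x = x :=
  Finsupp.mapDomain_id

lemma prepend_append (s t : List W) (x : WordChain W) :
    prepend (s ++ t) x = prepend s (prepend t x) := by
  induction x using Finsupp.induction_linear with
  | zero => simp only [map_zero]
  | add x y hx hy => simp only [map_add, hx, hy]
  | single l n => simp only [prepend_single, List.append_assoc]

lemma boundary_prepend_singleton (v : W) (x : WordChain W) :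
    boundary (prepend [v] x) = x - prepend [v] (boundary x) := by
  induction x using Finsupp.induction_linear with
  | zero => simp only [map_zero, sub_zero]
  | add x y hx hy => simp only [map_add, hx, hy]; abel
  | single l n => simp [wordBoundary, smul_sub]

lemma boundary_wordBoundary (l : List W) : boundary (wordBoundary l) = 0 := by
  induction l with
  | nil => exact map_zero _
  | cons v l ih => simp [wordBoundary, boundary_prepend_singleton, ih]

lemma boundary_boundary (x : WordChain W) : boundary (boundary x) = 0 := by
  induction x using Finsupp.induction_linear with
  | zero => simp only [map_zero]
  | add x y hx hy => simp only [map_add, hx, hy, add_zero]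
  | single l n => rw [boundary_single, map_smul, boundary_wordBoundary, smul_zero]

lemma boundary_prepend (t : List W) (x : WordChain W) :
    boundary (prepend t x) = (-1 : ℤ) ^ t.length • prepend t (boundary x) + prefixFaces t x := by
  induction t with
  | nil => simp [prepend_nil, prefixFaces]
  | cons v t ih =>
    rw [← List.singleton_append, prepend_append, boundary_prepend_singleton, ih,
      prepend_append [v] t, map_add, map_smul]
    simp only [List.singleton_append, prefixFaces, LinearMap.sub_apply, LinearMap.comp_apply,
      List.length_cons, pow_succ]
    module

lemma wordBoundary_eq_prefixFaces (l : List W) : wordBoundary l = prefixFaces l (.single [] 1) := by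
  have h := boundary_prepend l (.single [] 1)
  simpa [wordBoundary] using h

lemma mapLetters_prepend (g : W → W') (t : List W) (x : WordChain W) :
    mapLetters g (prepend t x) = prepend (t.map g) (mapLetters g x) := by
  induction x using Finsupp.induction_linear with
  | zero => simp only [map_zero]
  | add x y hx hy => simp only [map_add, hx, hy]
  | single l n => simp only [prepend_single, mapLetters_single, List.map_append]

lemma mapLetters_boundary (g : W → W') (x : WordChain W) :
    mapLetters g (boundary x) = boundary (mapLetters g x) := by
  have key (l : List W) : mapLetters g (wordBoundary l) = wordBoundary (l.map g) := by
    induction l with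
    | nil => exact map_zero _
    | cons v l ih => simp [wordBoundary, mapLetters_prepend, ih]
  induction x using Finsupp.induction_linear with
  | zero => simp only [map_zero]
  | add x y hx hy => simp only [map_add, hx, hy]
  | single l n => simp only [boundary_single, map_smul, mapLetters_single, key]

lemma map_mem_of_mem_supported {M : Type*} [AddCommGroup M] {S : Set (List W)}
    (f : WordChain W →ₗ[ℤ] M) (N : Submodule ℤ M) (h : ∀ l ∈ S, f (.single l 1) ∈ N)
    {x : WordChain W} (hx : x ∈ Finsupp.supported ℤ ℤ S) : f x ∈ N := by
  rw [Finsupp.supported_eq_span_single] at hx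
  exact Submodule.map_span_le f _ N |>.2 (by rintro _ ⟨l, hl, rfl⟩; exact h l hl)
    (Submodule.mem_map_of_mem hx)

lemma prepend_mem_supported {S T : Set (List W)} {t : List W} (h : ∀ l ∈ S, t ++ l ∈ T)
    {x : WordChain W} (hx : x ∈ Finsupp.supported ℤ ℤ S) : prepend t x ∈ Finsupp.supported ℤ ℤ T :=
  map_mem_of_mem_supported _ _
    (fun l hl => prepend_single t l 1 ▸ Finsupp.single_mem_supported ℤ 1 (h l hl)) hx

lemma mapLetters_mem_supported {S : Set (List W)} {T : Set (List W')} {g : W → W'}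
    (h : ∀ l ∈ S, l.map g ∈ T) {x : WordChain W} (hx : x ∈ Finsupp.supported ℤ ℤ S) :
    mapLetters g x ∈ Finsupp.supported ℤ ℤ T :=
  map_mem_of_mem_supported _ _
    (fun l hl => mapLetters_single g l 1 ▸ Finsupp.single_mem_supported ℤ 1 (h l hl)) hx

lemma prefixFaces_mem_supported {S T : Set (List W)} {t : List W}
    (h : ∀ l ∈ S, ∀ t', IsFace t' t → t' ++ l ∈ T) {x : WordChain W}
    (hx : x ∈ Finsupp.supported ℤ ℤ S) : prefixFaces t x ∈ Finsupp.supported ℤ ℤ T := by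
  induction t generalizing T with
  | nil => exact zero_mem _
  | cons v t ih =>
    have hhead : prepend t x ∈ Finsupp.supported ℤ ℤ T :=
      prepend_mem_supported (fun l hl => h l hl t ⟨List.sublist_cons_self _ _, rfl⟩) hx
    have htail : prefixFaces t x ∈ Finsupp.supported ℤ ℤ {l | v :: l ∈ T} :=
      ih fun l hl t' ht' => h l hl (v :: t') ⟨ht'.1.cons_cons v, by simp [ht'.2]⟩
    exact sub_mem hhead (prepend_mem_supported (fun _ hl => hl) htail)

lemma boundary_mem_supported {S T : Set (List W)} (h : ∀ l ∈ S, ∀ l', IsFace l' l → l' ∈ T)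
    {x : WordChain W} (hx : x ∈ Finsupp.supported ℤ ℤ S) :
    boundary x ∈ Finsupp.supported ℤ ℤ T := by
  refine map_mem_of_mem_supported _ _ (fun l hl => ?_) hx
  rw [boundary_single, one_smul, wordBoundary_eq_prefixFaces]
  refine prefixFaces_mem_supported (S := {[]}) ?_ (Finsupp.single_mem_supported ℤ 1 rfl)
  rintro _ rfl t' hface
  rw [List.append_nil]
  exact h l hl t' hface

/-- The sum of the terms of a word chain that start with `t`, with this prefix removed. -/
noncomputable def stripPrefix (t : List W) : WordChain W →ₗ[ℤ] WordChain W :=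
  Finsupp.lcomapDomain (t ++ ·) (List.append_right_injective t)

lemma stripPrefix_mem_supported (t : List W) {S : Set (List W)} {x : WordChain W}
    (hx : x ∈ Finsupp.supported ℤ ℤ S) :
    stripPrefix t x ∈ Finsupp.supported ℤ ℤ {l | t ++ l ∈ S} :=
  fun l hl => by
    have h : stripPrefix t x l ≠ 0 := Finsupp.mem_support_iff.1 hl
    exact hx (Finsupp.mem_support_iff.2 h)

lemma stripPrefix_prepend (t : List W) (x : WordChain W) : stripPrefix t (prepend t x) = x := by
  ext l
  exact Finsupp.mapDomain_apply (List.append_right_injective t) _ _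

lemma stripPrefix_prepend_of_ne {s t : List W} (h : s.length = t.length) (hst : s ≠ t)
    (x : WordChain W) : stripPrefix t (prepend s x) = 0 := by
  ext l
  refine Finsupp.mapDomain_of_notMem_range _ _ ?_
  rintro ⟨l', hl'⟩
  exact hst (List.append_inj_left hl' h)

lemma prepend_stripPrefix_apply (t l : List W) (x : WordChain W) [Decidable (l.take t.length = t)] :
    prepend t (stripPrefix t x) l = if l.take t.length = t then x l else 0 := by
  split_ifs with h
  · obtain ⟨r, rfl⟩ : ∃ r, l = t ++ r :=
      ⟨l.drop t.length, by simpa only [h] using (List.take_append_drop t.length l).symm⟩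
    exact DFunLike.congr_fun (stripPrefix_prepend t (stripPrefix t x)) r
  · refine Finsupp.mapDomain_of_notMem_range _ _ ?_
    rintro ⟨r, rfl⟩
    exact h (List.take_left' rfl)

end WordChains

/-! ### Words that are linearly independent modulo a subspace -/

section IndependentWords

variable {F W : Type} [Field F] [AddCommGroup W] [Module F W]

/-- The letters of the word are linearly independent modulo `U`. -/
def IsIndepMod : Submodule F W → List W → Prop
  | _, [] => True
  | U, v :: l => v ∉ U ∧ IsIndepMod (U ⊔ F ∙ v) l

/-- The subspace spanned by `U` and the letters of `l`. -/
def spanWith (U : Submodule F W) (l : List W) : Submodule F W :=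
  U ⊔ Submodule.span F {v | v ∈ l}

/-- The words of length `k` with letters in `E` that are linearly independent modulo `U`. -/
def indepWords (U : Submodule F W) (E : Set W) (k : ℕ) : Set (List W) :=
  {l | l.length = k ∧ (∀ v ∈ l, v ∈ E) ∧ IsIndepMod U l}

variable {U U' : Submodule F W} {E : Set W} {l l' s t : List W} {v e : W} {k : ℕ}

@[simp] lemma spanWith_nil : spanWith U [] = U := by
  simp [spanWith]

lemma spanWith_cons : spanWith U (v :: l) = spanWith (U ⊔ F ∙ v) l := by
  simp only [spanWith, List.mem_cons, Set.ofPred_or, Set.ofPred_eq_eq_singleton,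
    Submodule.span_union, sup_assoc]

lemma le_spanWith : U ≤ spanWith U l :=
  le_sup_left

lemma mem_spanWith (h : v ∈ l) : v ∈ spanWith U l :=
  Submodule.mem_sup_right (Submodule.subset_span h)

lemma spanWith_le (h : U ≤ U') (h' : ∀ v ∈ l, v ∈ U') : spanWith U l ≤ U' :=
  sup_le h (Submodule.span_le.2 h')

lemma spanWith_mono (h : U ≤ U') (h' : l ⊆ l') : spanWith U l ≤ spanWith U' l' :=
  spanWith_le (h.trans le_spanWith) fun _ hv => mem_spanWith (h' hv)

lemma spanWith_append : spanWith U (s ++ t) = spanWith (spanWith U s) t := by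
  simp only [spanWith, List.mem_append, Set.ofPred_or, Submodule.span_union, sup_assoc]

lemma spanWith_sup_span (h : ∀ v ∈ l, v ∈ E) :
    spanWith U l ⊔ Submodule.span F E = U ⊔ Submodule.span F E := by
  have hE : {v | v ∈ l} ⊆ E := h
  rw [spanWith, sup_assoc, ← Submodule.span_union, Set.union_eq_right.2 hE]

lemma IsIndepMod.mono (h : U' ≤ U) (hl : IsIndepMod U l) : IsIndepMod U' l := by
  induction l generalizing U U' with
  | nil => trivial
  | cons v l ih => exact ⟨fun hv => hl.1 (h hv), ih (sup_le_sup_right h _) hl.2⟩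

lemma IsIndepMod.sublist (h : l'.Sublist l) (hl : IsIndepMod U l) : IsIndepMod U l' := by
  induction h generalizing U with
  | slnil => trivial
  | cons v _ ih => exact ih (hl.2.mono le_sup_left)
  | cons_cons v _ ih => exact ⟨hl.1, ih hl.2⟩

lemma isIndepMod_append :
    IsIndepMod U (s ++ t) ↔ IsIndepMod U s ∧ IsIndepMod (spanWith U s) t := by
  induction s generalizing U with
  | nil => simp [IsIndepMod]
  | cons v s ih => simp [IsIndepMod, spanWith_cons, ih, and_assoc]

lemma mem_of_mem_spanWith (hl : IsIndepMod U' l) (hU : U ≤ U') (he : e ∈ U')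
    (he' : e ∈ spanWith U l) : e ∈ U := by
  induction l generalizing U U' with
  | nil => simpa using he'
  | cons v l ih =>
    rw [spanWith_cons] at he'
    have hev : e ∈ U ⊔ F ∙ v := ih hl.2 (sup_le_sup_right hU _) (Submodule.mem_sup_left he) he'
    obtain ⟨a, ha, w, hw, rfl⟩ := Submodule.mem_sup.1 hev
    obtain ⟨c, rfl⟩ := Submodule.mem_span_singleton.1 hw
    have hcv : c • v ∈ U' := (U'.add_mem_iff_right (hU ha)).1 he
    have hc : c = 0 := by
      by_contra hc
      exact hl.1 ((U'.smul_mem_iff hc).1 hcv)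
    simpa [hc] using ha

lemma mem_sup_span_singleton_comm (hv : v ∉ U) (h : v ∈ U ⊔ F ∙ e) : e ∈ U ⊔ F ∙ v := by
  have h' : v ∈ Submodule.span F (insert e (U : Set W)) := by
    rwa [Submodule.span_insert, Submodule.span_eq, sup_comm]
  rw [sup_comm, ← Submodule.span_eq U, ← Submodule.span_insert]
  exact mem_span_insert_exchange h' (by rwa [Submodule.span_eq])

lemma IsIndepMod.cons (hl : IsIndepMod U l) (he : e ∉ spanWith U l) : IsIndepMod U (e :: l) := by
  refine ⟨fun h => he (le_spanWith h), ?_⟩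
  induction l generalizing U with
  | nil => trivial
  | cons v l ih =>
    rw [spanWith_cons] at he
    refine ⟨fun h => he (le_spanWith (mem_sup_span_singleton_comm hl.1 h)), ?_⟩
    rw [sup_right_comm]
    exact ih hl.2 he

lemma IsIndepMod.finrank_spanWith [FiniteDimensional F W] (hl : IsIndepMod U l) :
    finrank F (spanWith U l) = finrank F U + l.length := by
  induction l generalizing U with
  | nil => rw [spanWith_nil, List.length_nil, add_zero]
  | cons v l ih =>
    rw [spanWith_cons, ih hl.2, Submodule.finrank_sup_span_singleton hl.1, List.length_cons]
    ring

lemma cons_mem_indepWords (hl : l ∈ indepWords U E k) (heE : e ∈ E) (he : e ∉ spanWith U l) :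
    e :: l ∈ indepWords U E (k + 1) :=
  ⟨by rw [List.length_cons, hl.1], List.forall_mem_cons.2 ⟨heE, hl.2.1⟩, hl.2.2.cons he⟩

lemma append_mem_indepWords {i j : ℕ} (hs : s ∈ indepWords U E i)
    (ht : t ∈ indepWords (spanWith U s) E j) : s ++ t ∈ indepWords U E (i + j) :=
  ⟨by rw [List.length_append, hs.1, ht.1], List.forall_mem_append.2 ⟨hs.2.1, ht.2.1⟩,
    isIndepMod_append.2 ⟨hs.2.2, ht.2.2⟩⟩

lemma indepWords_face (hl : l ∈ indepWords U E (k + 1)) (h : IsFace l' l) :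
    l' ∈ indepWords U E k :=
  ⟨by have := h.2; have := hl.1; lia, fun v hv => hl.2.1 v (h.1.subset hv), hl.2.2.sublist h.1⟩

lemma boundary_mem_indepWords {x : WordChain W}
    (hx : x ∈ Finsupp.supported ℤ ℤ (indepWords U E (k + 1))) :
    boundary x ∈ Finsupp.supported ℤ ℤ (indepWords U E k) :=
  boundary_mem_supported (fun _ hl _ h => indepWords_face hl h) hx

lemma exists_mem_indepWords [FiniteDimensional F W]
    (hr : finrank F U + k ≤ finrank F ↥(U ⊔ Submodule.span F E)) :
    ∃ l, l ∈ indepWords U E k := by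
  induction k with
  | zero => exact ⟨[], rfl, by simp, trivial⟩
  | succ k ih =>
    obtain ⟨l, hl⟩ := ih (by lia)
    by_contra! hnone
    have hle : U ⊔ Submodule.span F E ≤ spanWith U l := by
      refine sup_le le_spanWith (Submodule.span_le.2 fun e he => ?_)
      by_contra he'
      exact hnone (e :: l) (cons_mem_indepWords hl he he')
    have hfin := Submodule.finrank_mono hle
    rw [hl.2.2.finrank_spanWith, hl.1] at hfin
    lia

end IndependentWords

section Acyclicity

variable {F W : Type} [Field F] [AddCommGroup W] [Module F W]
  {U : Submodule F W} {E : Set W} {e : W} {k s : ℕ} {t : List W} {z : WordChain W}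

/-- The words of `indepWords U E k` whose first `s` letters already span `e` modulo `U` if all
letters do. The proof of acyclicity filters the complex of words by these sets. -/
def earlyWords (U : Submodule F W) (E : Set W) (e : W) (k s : ℕ) : Set (List W) :=
  {l | l ∈ indepWords U E k ∧ (e ∈ spanWith U l → e ∈ spanWith U (l.take s))}

/-- The word `t` spans `e` modulo `U`, and its last letter is needed for that. -/
def IsEntry (U : Submodule F W) (e : W) (s : ℕ) (t : List W) : Prop :=
  t.length = s + 1 ∧ e ∈ spanWith U t ∧ e ∉ spanWith U (t.take s)

lemma mem_spanWith_face {t' r : List W} (hi : IsIndepMod U (t ++ r)) (ht : IsFace t' t)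
    (he : e ∈ spanWith U t) (he' : e ∈ spanWith U (t' ++ r)) : e ∈ spanWith U t' := by
  rw [spanWith_append] at he'
  exact mem_of_mem_spanWith (isIndepMod_append.1 hi).2 (spanWith_mono le_rfl ht.1.subset) he he'

lemma face_append_mem_earlyWords {t' r : List W} (ht : IsEntry U e s t)
    (hr : t ++ r ∈ indepWords U E (k + 1)) (ht' : IsFace t' t) :
    t' ++ r ∈ earlyWords U E e k s := by
  have hlen : t'.length = s := by have := ht'.2; have := ht.1; lia
  have hface : IsFace (t' ++ r) (t ++ r) :=
    ⟨ht'.1.append (List.Sublist.refl r), by simp only [List.length_append]; have := ht'.2; lia⟩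
  refine ⟨indepWords_face hr hface, fun he => ?_⟩
  rw [List.take_left' hlen]
  exact mem_spanWith_face hr.2.2 ht' ht.2.1 he

lemma take_mem_isEntry {l : List W} (hs : s + 1 ≤ k) (hl : l ∈ earlyWords U E e k (s + 1))
    (hl' : l ∉ earlyWords U E e k s) : IsEntry U e s (l.take (s + 1)) := by
  obtain ⟨he, hnot⟩ : e ∈ spanWith U l ∧ e ∉ spanWith U (l.take s) := by
    by_contra h
    exact hl' ⟨hl.1, fun he => by_contra fun hne => h ⟨he, hne⟩⟩
  refine ⟨?_, hl.2 he, ?_⟩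
  · rw [List.length_take, hl.1.1, min_eq_left hs]
  · rwa [List.take_take, min_eq_left s.le_succ]

lemma stripPrefix_prefixFaces {p r : List W} (ht : IsEntry U e s t) (hp : p.length = s + 1)
    (hpr : p ++ r ∈ earlyWords U E e k (s + 1)) :
    stripPrefix t (prefixFaces p (.single r 1)) = 0 := by
  have hfaces : prefixFaces p (.single r 1) ∈
      Finsupp.supported ℤ ℤ {l | ∃ p', IsFace p' p ∧ l = p' ++ r} := by
    refine prefixFaces_mem_supported (S := {r}) ?_ (Finsupp.single_mem_supported ℤ 1 rfl)
    rintro l rfl p' hp'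
    exact ⟨p', hp', rfl⟩
  ext l
  by_contra hl
  obtain ⟨p', hp', htl⟩ := hfaces (Finsupp.mem_support_iff.2 hl)
  have hlen : p'.length = s := by have := hp'.2; lia
  have he : e ∈ spanWith U (p' ++ r) :=
    htl ▸ spanWith_mono le_rfl (List.subset_append_left _ _) ht.2.1
  have hep : e ∈ spanWith U p := by
    have := hpr.2 (spanWith_mono le_rfl (hp'.1.append (List.Sublist.refl r)).subset he)
    rwa [List.take_left' hp] at this
  have htake : t.take s = p' := by
    have := congrArg (List.take s) htl
    rwa [List.take_append_of_le_length (by have := ht.1; lia), List.take_left' hlen] at this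
  exact ht.2.2 (htake ▸ mem_spanWith_face hpr.1.2.2 hp' hep he)

-- Faces that shorten the prefix of length `s + 1` cannot have the prefix `t`: they enter earlier.
lemma stripPrefix_boundary (ht : IsEntry U e s t) (hs : s + 1 ≤ k)
    (hz : z ∈ Finsupp.supported ℤ ℤ (earlyWords U E e k (s + 1))) :
    stripPrefix t (boundary z) = (-1 : ℤ) ^ (s + 1) • boundary (stripPrefix t z) := by
  rw [← sub_eq_zero, ← Submodule.mem_bot ℤ]
  refine map_mem_of_mem_supported
    (stripPrefix t ∘ₗ boundary - (-1 : ℤ) ^ (s + 1) • boundary ∘ₗ stripPrefix t) ⊥ ?_ hz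
  intro l hl
  obtain ⟨p, r, rfl, hp⟩ : ∃ p r, l = p ++ r ∧ p.length = s + 1 :=
    ⟨l.take (s + 1), l.drop (s + 1), (List.take_append_drop _ _).symm, by simp [hl.1.1, hs]⟩
  have hstrip : stripPrefix t (boundary (prepend p (.single r 1))) =
      (-1 : ℤ) ^ (s + 1) • stripPrefix t (prepend p (boundary (.single r 1))) := by
    rw [boundary_prepend, map_add, map_smul, stripPrefix_prefixFaces ht hp hl, add_zero, hp]
  have hcomm : stripPrefix t (prepend p (boundary (.single r 1))) =
      boundary (stripPrefix t (prepend p (.single r 1))) := by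
    rcases eq_or_ne p t with rfl | hpt
    · rw [stripPrefix_prepend, stripPrefix_prepend]
    · simp only [stripPrefix_prepend_of_ne (hp.trans ht.1.symm) hpt, map_zero]
  rw [← prepend_single, Submodule.mem_bot, LinearMap.sub_apply, sub_eq_zero]
  exact hstrip.trans (congrArg _ hcomm)

lemma exists_boundary_eq_of_earlyWords_zero (heE : e ∈ E) (heU : e ∉ U)
    (hz : z ∈ Finsupp.supported ℤ ℤ (earlyWords U E e k 0)) (hdz : boundary z = 0) :
    ∃ y ∈ Finsupp.supported ℤ ℤ (indepWords U E (k + 1)), boundary y = z := by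
  refine ⟨prepend [e] z, prepend_mem_supported (fun l hl => ?_) hz, ?_⟩
  · exact cons_mem_indepWords hl.1 heE fun he => heU (by simpa using hl.2 he)
  · rw [boundary_prepend_singleton, hdz, map_zero, sub_zero]

-- The terms of `z` in the top filtration step are grouped by their prefix of length `s + 1`.
lemma exists_sub_boundary_mem_earlyWords (hs : s + 1 ≤ k)
    (hz : z ∈ Finsupp.supported ℤ ℤ (earlyWords U E e k (s + 1)))
    (hfill : ∀ t, IsEntry U e s t →
      ∃ y ∈ Finsupp.supported ℤ ℤ {l | t ++ l ∈ indepWords U E (k + 1)},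
        boundary y = stripPrefix t z) :
    ∃ y ∈ Finsupp.supported ℤ ℤ (indepWords U E (k + 1)),
      z - boundary y ∈ Finsupp.supported ℤ ℤ (earlyWords U E e k s) := by
  classical
  choose! y hy hyz using hfill
  let P : Finset (List W) := (z.support.image (List.take (s + 1))).filter (IsEntry U e s)
  have hP (t) (ht : t ∈ P) : IsEntry U e s t := (Finset.mem_filter.1 ht).2
  refine ⟨∑ t ∈ P, (-1 : ℤ) ^ (s + 1) • prepend t (y t), sum_mem fun t ht => Submodule.smul_mem _ _
    (prepend_mem_supported (fun l hl => hl) (hy t (hP t ht))), ?_⟩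
  have hboundary : boundary (∑ t ∈ P, (-1 : ℤ) ^ (s + 1) • prepend t (y t)) =
      ∑ t ∈ P, prepend t (stripPrefix t z) +
        ∑ t ∈ P, (-1 : ℤ) ^ (s + 1) • prefixFaces t (y t) := by
    rw [map_sum, ← Finset.sum_add_distrib]
    refine Finset.sum_congr rfl fun t ht => ?_
    rw [map_smul, boundary_prepend, hyz t (hP t ht), (hP t ht).1, smul_add, smul_smul, ← mul_pow]
    simp
  rw [hboundary, ← sub_sub]
  refine sub_mem (fun l hl => ?_) (sum_mem fun t ht => Submodule.smul_mem _ _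
    (prefixFaces_mem_supported (fun l hl t' => face_append_mem_earlyWords (hP t ht) hl)
      (hy t (hP t ht))))
  have hremainder : (z - ∑ t ∈ P, prepend t (stripPrefix t z)) l =
      z l - if l.take (s + 1) ∈ P then z l else 0 := by
    rw [Finsupp.sub_apply, Finsupp.finsetSum_apply,
      ← Finset.sum_ite_eq P (l.take (s + 1)) fun _ => z l]
    congr 1
    exact Finset.sum_congr rfl fun t ht => by rw [prepend_stripPrefix_apply, (hP t ht).1]
  rw [SetLike.mem_coe, Finsupp.mem_support_iff, hremainder] at hl
  have hzl : l ∈ z.support := Finsupp.mem_support_iff.2 fun h => hl (by simp [h])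
  by_contra hlate
  have hmem : l.take (s + 1) ∈ P := Finset.mem_filter.2
    ⟨Finset.mem_image_of_mem _ hzl, take_mem_isEntry hs (hz hzl) hlate⟩
  exact hl (by rw [if_pos hmem, sub_self])

variable [FiniteDimensional F W]

variable (E k) in
/-- Cycles of words of length `k` in `E`, independent modulo `U`, are boundaries whenever `E` spans
at least `k + 1` dimensions modulo `U`. -/
def WordsAcyclic (U : Submodule F W) : Prop :=
  finrank F U + k < finrank F ↥(U ⊔ Submodule.span F E) →
    ∀ z ∈ Finsupp.supported ℤ ℤ (indepWords U E k), boundary z = 0 →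
      ∃ y ∈ Finsupp.supported ℤ ℤ (indepWords U E (k + 1)), boundary y = z

lemma exists_boundary_eq_stripPrefix
    (ih : ∀ j < k, ∀ U : Submodule F W, WordsAcyclic E j U)
    (hr : finrank F U + k < finrank F ↥(U ⊔ Submodule.span F E)) (hs : s + 1 ≤ k)
    (hz : z ∈ Finsupp.supported ℤ ℤ (earlyWords U E e k (s + 1))) (hdz : boundary z = 0)
    (ht : IsEntry U e s t) :
    ∃ y ∈ Finsupp.supported ℤ ℤ {l | t ++ l ∈ indepWords U E (k + 1)},
      boundary y = stripPrefix t z := by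
  obtain h0 | ⟨r, hr'⟩ := (stripPrefix t z).support.eq_empty_or_nonempty
  · exact ⟨0, zero_mem _, by rw [Finsupp.support_eq_empty.1 h0, map_zero]⟩
  have hword : t ++ r ∈ indepWords U E k := (stripPrefix_mem_supported t hz hr').1
  have ht' : t ∈ indepWords U E (s + 1) :=
    ⟨ht.1, fun v hv => hword.2.1 v (List.mem_append_left _ hv), (isIndepMod_append.1 hword.2.2).1⟩
  have hcycle : boundary (stripPrefix t z) = 0 := by
    have h := stripPrefix_boundary ht hs hz
    rw [hdz, map_zero, eq_comm] at h
    exact (Int.isUnit_iff.2 (neg_one_pow_eq_or ℤ (s + 1))).smul_eq_zero.1 h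
  have hsupp : stripPrefix t z ∈
      Finsupp.supported ℤ ℤ (indepWords (spanWith U t) E (k - (s + 1))) := by
    intro l hl
    obtain ⟨hlen, hE, hind⟩ : t ++ l ∈ indepWords U E k := (stripPrefix_mem_supported t hz hl).1
    rw [List.length_append, ht.1] at hlen
    exact ⟨by lia, fun v hv => hE v (List.mem_append_right _ hv), (isIndepMod_append.1 hind).2⟩
  obtain ⟨y, hy, hyz⟩ := ih (k - (s + 1)) (by lia) (spanWith U t)
    (by rw [spanWith_sup_span ht'.2.1, ht'.2.2.finrank_spanWith, ht.1]; lia) _ hsupp hcycle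
  refine ⟨y, Finsupp.supported_mono (fun l hl => ?_) hy, hyz⟩
  have := append_mem_indepWords ht' hl
  rwa [show s + 1 + (k - (s + 1) + 1) = k + 1 by lia] at this

lemma wordsAcyclic (k : ℕ) (U : Submodule F W) : WordsAcyclic E k U := by
  induction k using Nat.strong_induction_on generalizing U with
  | _ k ih =>
  intro hr z hz hdz
  obtain ⟨e, heE, heU⟩ : ∃ e ∈ E, e ∉ U := by
    by_contra! h
    rw [sup_eq_left.2 (Submodule.span_le.2 h)] at hr
    lia
  suffices main : ∀ s ≤ k, ∀ z ∈ Finsupp.supported ℤ ℤ (earlyWords U E e k s), boundary z = 0 →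
      ∃ y ∈ Finsupp.supported ℤ ℤ (indepWords U E (k + 1)), boundary y = z by
    have hearly : indepWords U E k ⊆ earlyWords U E e k k := fun l hl =>
      ⟨hl, fun h => by rwa [List.take_of_length_le hl.1.le]⟩
    exact main k le_rfl z (Finsupp.supported_mono hearly hz) hdz
  intro s
  induction s with
  | zero => exact fun _ z hz hdz => exists_boundary_eq_of_earlyWords_zero heE heU hz hdz
  | succ s ihs =>
    intro hs z hz hdz
    obtain ⟨y, hy, hzy⟩ := exists_sub_boundary_mem_earlyWords hs hz
      fun t ht => exists_boundary_eq_stripPrefix ih hr hs hz hdz ht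
    obtain ⟨y', hy', hyy'⟩ := ihs (by lia) _ hzy (by rw [map_sub, hdz, boundary_boundary, sub_zero])
    exact ⟨y' + y, add_mem hy' hy, by rw [map_add, hyy', sub_add_cancel]⟩

end Acyclicity

/-! ### Automorphisms fixing one subspace and displacing vectors into another -/

section RelativeGroups

variable {F W : Type} [Field F] [AddCommGroup W] [Module F W]

/-- The group of automorphisms of `W` that are the identity on `U` and on `W ⧸ K`. -/
def relGL (U K : Submodule F W) : Subgroup (W ≃ₗ[F] W) where
  carrier := {g | (∀ u ∈ U, g u = u) ∧ ∀ w, g w - w ∈ K}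
  one_mem' := ⟨fun _ _ => rfl, fun w => by simp⟩
  mul_mem' {a b} ha hb := by
    refine ⟨fun u hu => ?_, fun w => ?_⟩
    · rw [LinearEquiv.mul_apply, hb.1 u hu, ha.1 u hu]
    · rw [LinearEquiv.mul_apply, ← sub_add_sub_cancel _ (b w)]
      exact K.add_mem (ha.2 (b w)) (hb.2 w)
  inv_mem' {a} ha := by
    refine ⟨fun u hu => a.symm_apply_eq.2 (ha.1 u hu).symm, fun w => ?_⟩
    rw [← neg_sub]
    have h := ha.2 (a⁻¹ w)
    rw [show a (a⁻¹ w) = w from a.apply_symm_apply w] at h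
    exact K.neg_mem h

/-- The translate `t + K` of a subspace. -/
def translate (t : W) (K : Submodule F W) : Set W := {v | v - t ∈ K}

variable {U U' K K' V T : Submodule F W} {g : W ≃ₗ[F] W} {x y l : List W} {t v v' c : W} {k : ℕ}

lemma relGL_mono (hU : U' ≤ U) (hK : K ≤ K') : relGL U K ≤ relGL U' K' :=
  fun _ hg => ⟨fun u hu => hg.1 u (hU hu), fun w => hK (hg.2 w)⟩

lemma relGL_commute {g h : W ≃ₗ[F] W} (hg : g ∈ relGL V T) (hh : h ∈ relGL T V) : Commute g h := by
  ext w
  rw [LinearEquiv.mul_apply, LinearEquiv.mul_apply]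
  have h1 : g (h w) = g w + (h w - w) := by rw [← hg.1 _ (hh.2 w), ← map_add, add_sub_cancel]
  have h2 : h (g w) = h w + (g w - w) := by rw [← hh.1 _ (hg.2 w), ← map_add, add_sub_cancel]
  rw [h1, h2]
  abel

lemma map_eq_self_iff : l.map g = l ↔ ∀ v ∈ l, g v = v := by
  rw [← List.map_inj_left, List.map_id']

lemma mem_relGL_spanWith_iff (hg : g ∈ relGL U K) :
    g ∈ relGL (spanWith U l) K ↔ l.map g = l := by
  rw [map_eq_self_iff]
  refine ⟨fun h v hv => h.1 v (mem_spanWith hv), fun h => ⟨fun u hu => ?_, hg.2⟩⟩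
  have hle : spanWith U l ≤ LinearMap.eqLocus (g : W →ₗ[F] W) LinearMap.id := spanWith_le hg.1 h
  exact hle hu

lemma self_mem_translate : t ∈ translate t K := by
  simp [translate]

lemma mem_translate_zero : v ∈ translate 0 K ↔ v ∈ K := by
  simp [translate]

lemma sub_mem_of_mem_translate (hv : v ∈ translate t K) (hv' : v' ∈ translate t K) :
    v - v' ∈ K := by
  rw [← sub_sub_sub_cancel_right v v' t]
  exact K.sub_mem hv hv'

lemma apply_mem_translate (hg : g ∈ relGL U K) (hv : v ∈ translate t K) : g v ∈ translate t K := by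
  have h := K.add_mem (hg.2 v) hv
  rwa [sub_add_sub_cancel] at h

lemma sup_span_translate (hv : v ∈ translate t K) (hvU : v ∈ U) :
    U ⊔ Submodule.span F (translate t K) = U ⊔ K := by
  apply le_antisymm
  · refine sup_le le_sup_left (Submodule.span_le.2 fun w hw => ?_)
    rw [← add_sub_cancel v w]
    exact Submodule.add_mem_sup hvU (sub_mem_of_mem_translate hw hv)
  · refine sup_le le_sup_left fun w hw => Submodule.mem_sup_right ?_
    have htw : t + w ∈ translate t K := by simpa [translate] using hw
    rw [← add_sub_cancel_left t w]
    exact sub_mem (Submodule.subset_span htw) (Submodule.subset_span self_mem_translate)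

lemma IsIndepMod.map (g : W ≃ₗ[F] W) (hl : IsIndepMod U l) :
    IsIndepMod (U.map (g : W →ₗ[F] W)) (l.map g) := by
  induction l generalizing U with
  | nil => trivial
  | cons v l ih =>
    refine ⟨fun h => hl.1 (by simpa [Submodule.mem_map] using h), ?_⟩
    have h := ih hl.2
    rwa [Submodule.map_sup, Submodule.map_span, Set.image_singleton] at h

lemma map_eq_of_mem_relGL (hg : g ∈ relGL U K) : U.map (g : W →ₗ[F] W) = U :=
  SetLike.coe_injective ((Set.image_congr hg.1).trans (Set.image_id _))

lemma IsIndepMod.map_add (hc : c ∈ U) (hl : IsIndepMod U l) : IsIndepMod U (l.map (· + c)) := by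
  induction l generalizing U with
  | nil => trivial
  | cons v l ih =>
    refine ⟨fun h => hl.1 ((U.add_mem_iff_left hc).1 h), ?_⟩
    refine (ih (Submodule.mem_sup_left hc) hl.2).mono (sup_le le_sup_left ?_)
    rw [Submodule.span_singleton_le_iff_mem, sup_comm]
    exact Submodule.add_mem_sup (Submodule.mem_span_singleton_self v) hc

lemma IsIndepMod.sup_of_disjoint (hl : IsIndepMod U l) (hT : spanWith U l ≤ T)
    (hV : Disjoint V T) : IsIndepMod (U ⊔ V) l := by
  induction l generalizing U with
  | nil => trivial
  | cons v l ih =>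
    refine ⟨fun hv => hl.1 ?_, ?_⟩
    · obtain ⟨a, ha, b, hb, rfl⟩ := Submodule.mem_sup.1 hv
      have habT : a + b ∈ T := hT (mem_spanWith List.mem_cons_self)
      have hbT : b ∈ T := (T.add_mem_iff_right (hT (le_spanWith ha))).1 habT
      rwa [Submodule.disjoint_def.1 hV b hb hbT, add_zero]
    · rw [sup_right_comm]
      exact ih hl.2 (by rwa [← spanWith_cons])

lemma map_mem_indepWords (hg : g ∈ relGL U K) (hl : l ∈ indepWords U (translate t K) k) :
    l.map g ∈ indepWords U (translate t K) k := by
  refine ⟨by rw [List.length_map, hl.1], List.forall_mem_map.2 fun v hv =>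
    apply_mem_translate hg (hl.2.1 v hv), ?_⟩
  simpa only [map_eq_of_mem_relGL hg] using hl.2.2.map g

lemma exists_dual_ne_zero_ne_zero (hv : v ∉ U) (hv' : v' ∉ U) :
    ∃ φ : Dual F W, U ≤ LinearMap.ker φ ∧ φ v ≠ 0 ∧ φ v' ≠ 0 := by
  obtain ⟨φ, hφ, hφU⟩ := Submodule.exists_le_ker_of_notMem hv
  obtain ⟨ψ, hψ, hψU⟩ := Submodule.exists_le_ker_of_notMem hv'
  by_cases h : φ v' = 0
  · by_cases h' : ψ v = 0
    · refine ⟨φ + ψ, fun u hu => ?_, by simpa [h'] using hφ, by simpa [h] using hψ⟩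
      simp [LinearMap.mem_ker.1 (hφU hu), LinearMap.mem_ker.1 (hψU hu)]
    · exact ⟨ψ, hψU, h', hψ⟩
  · exact ⟨φ, hφU, hφ, h⟩

lemma exists_relGL_apply_eq (hv : v ∉ U) (hv' : v' ∉ U) (h : v' - v ∈ K) :
    ∃ g ∈ relGL U K, g v = v' := by
  obtain ⟨φ, hφU, hφv, hφv'⟩ := exists_dual_ne_zero_ne_zero hv hv'
  have hunit : IsUnit (1 + φ ((φ v)⁻¹ • (v' - v))) := by
    rw [isUnit_iff_ne_zero, map_smul, map_sub, smul_eq_mul]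
    field_simp
    simpa using ⟨hφv', hφv⟩
  have happly (w : W) : LinearEquiv.dilatransvection hunit w = w + φ w • (φ v)⁻¹ • (v' - v) :=
    LinearEquiv.dilatransvection.apply
  refine ⟨LinearEquiv.dilatransvection hunit, ⟨fun u hu => ?_, fun w => ?_⟩, ?_⟩
  · rw [happly, LinearMap.mem_ker.1 (hφU hu), zero_smul, add_zero]
  · rw [happly, add_sub_cancel_left]
    exact K.smul_mem _ (K.smul_mem _ h)
  · rw [happly, smul_inv_smul₀ hφv, add_sub_cancel]

lemma exists_relGL_map_eq (hxy : x.length = y.length) (hx : IsIndepMod U x) (hy : IsIndepMod U y)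
    (hxt : ∀ v ∈ x, v ∈ translate t K) (hyt : ∀ v ∈ y, v ∈ translate t K) :
    ∃ g ∈ relGL U K, x.map g = y := by
  induction y generalizing x U with
  | nil => exact ⟨1, one_mem _, by simpa using hxy⟩
  | cons v' y ih =>
    obtain ⟨v, x, rfl⟩ := List.exists_cons_of_length_eq_add_one hxy
    obtain ⟨hvt, hxt⟩ := List.forall_mem_cons.1 hxt
    obtain ⟨hvt', hyt⟩ := List.forall_mem_cons.1 hyt
    obtain ⟨g, hg, hgv⟩ := exists_relGL_apply_eq hx.1 hy.1 (sub_mem_of_mem_translate hvt' hvt)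
    have hgx : IsIndepMod (U ⊔ F ∙ v') (x.map g) := by
      simpa [Submodule.map_sup, map_eq_of_mem_relGL hg, Submodule.map_span, hgv] using hx.2.map g
    obtain ⟨h, hh, hhx⟩ := ih (x := x.map g) (by simpa using hxy) hgx hy.2
      (List.forall_mem_map.2 fun w hw => apply_mem_translate hg (hxt w hw)) hyt
    refine ⟨h * g, mul_mem (relGL_mono le_sup_left le_rfl hh) hg, ?_⟩
    have hhv : h v' = v' := hh.1 v' (Submodule.mem_sup_right (Submodule.mem_span_singleton_self v'))
    rw [List.map_cons, LinearEquiv.mul_apply, hgv, hhv, ← hhx, List.map_map]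
    rfl

end RelativeGroups

section SplitPairs

variable {F W : Type} [Field F] [AddCommGroup W] [Module F W]

/-- A decomposition `W = V ⊕ T` for which `relGL T V`, a copy of `GL V`, is a Levi subgroup of
`relGL U K`. -/
structure IsSplitting (U K V T : Submodule F W) : Prop where
  le_right : U ≤ T
  left_le : V ≤ K
  isCompl : IsCompl V T
  inf_le : K ⊓ T ≤ U

variable {U K V T : Submodule F W}

lemma exists_isSplitting (U K : Submodule F W) : ∃ V T, IsSplitting U K V T := by
  obtain ⟨D, hD⟩ := exists_isCompl (U ⊓ K)
  have hdisj : Disjoint U (D ⊓ K) := by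
    rw [disjoint_iff, ← inf_assoc, inf_right_comm]
    exact hD.inf_eq_bot
  obtain ⟨T, hUT, hT⟩ := hdisj.exists_isCompl
  refine ⟨D ⊓ K, T, hUT, inf_le_right, hT.symm, ?_⟩
  have hK : K ≤ U ⊓ K ⊔ D ⊓ K := by
    rw [← sup_inf_assoc_of_le D inf_le_right, hD.sup_eq_top, top_inf_eq]
  calc K ⊓ T ≤ (U ⊓ K ⊔ D ⊓ K) ⊓ T := inf_le_inf_right T hK
    _ = U ⊓ K ⊔ (D ⊓ K) ⊓ T := sup_inf_assoc_of_le _ (inf_le_left.trans hUT)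
    _ ≤ U := by rw [inf_comm _ T, hT.inf_eq_bot, sup_bot_eq]; exact inf_le_left

lemma IsSplitting.sup_eq (h : IsSplitting U K V T) : V ⊔ U = U ⊔ K := by
  apply le_antisymm
  · exact sup_le (h.left_le.trans le_sup_right) le_sup_left
  · refine sup_le le_sup_right ?_
    calc K = (V ⊔ T) ⊓ K := by rw [h.isCompl.sup_eq_top, top_inf_eq]
      _ = V ⊔ T ⊓ K := sup_inf_assoc_of_le T h.left_le
      _ ≤ V ⊔ U := sup_le_sup_left (inf_comm T K ▸ h.inf_le) V

lemma IsSplitting.finrank_add_finrank [FiniteDimensional F W] (h : IsSplitting U K V T) :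
    finrank F V + finrank F U = finrank F ↥(U ⊔ K) := by
  rw [← Submodule.finrank_sup_add_finrank_inf_eq, h.sup_eq,
    (h.isCompl.disjoint.mono_right h.le_right).eq_bot, finrank_bot, add_zero]

lemma IsSplitting.relGL_le (h : IsSplitting U K V T) : relGL T V ≤ relGL U K :=
  relGL_mono h.le_right h.left_le

end SplitPairs

section Functoriality

variable {k : Type u} [CommRing k] {G H L : Type u} [Group G] [Group H] [Group L]
variable {A : Rep.{u} k G} {B : Rep.{u} k H} {C : Rep.{u} k L}

lemma chainsMap_comp_eq {f : G →* H} {g : H →* L} {h : G →* L} (hfg : g.comp f = h)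
    {φ : A ⟶ Rep.res f B} {ψ : B ⟶ Rep.res g C} {χ : A ⟶ Rep.res h C}
    (hφψ : ∀ a, ψ.hom (φ.hom a) = χ.hom a) : chainsMap f φ ≫ chainsMap g ψ = chainsMap h χ := by
  rw [← chainsMap_comp]
  exact chainsMap_congr hfg (LinearMap.ext hφψ)

lemma map_comp_eq {f : G →* H} {g : H →* L} {h : G →* L} (hfg : g.comp f = h)
    {φ : A ⟶ Rep.res f B} {ψ : B ⟶ Rep.res g C} {χ : A ⟶ Rep.res h C}
    (hφψ : ∀ a, ψ.hom (φ.hom a) = χ.hom a) (n : ℕ) : map f φ n ≫ map g ψ n = map h χ n :=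
  (map_comp f g φ ψ n).symm.trans (map_congr hfg (LinearMap.ext hφψ) n)

lemma chainsMap_sub_add {f : G →* H} {φ φ₁ φ₂ φ₃ : A ⟶ Rep.res f B}
    (h : ∀ a, φ.hom a = φ₁.hom a - φ₂.hom a + φ₃.hom a) :
    chainsMap f φ = chainsMap f φ₁ - chainsMap f φ₂ + chainsMap f φ₃ := by
  ext n x a
  simp [chainsMap_f, h]

lemma epi_map_zero_of_surjective (f : G →* H) {φ : A ⟶ Rep.res f B}
    (hφ : Function.Surjective φ.hom) : Epi (map f φ 0) := by
  have : Epi φ.toModuleCatHom := (ModuleCat.epi_iff_surjective _).2 hφ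
  exact epi_of_epi_fac (H0π_comp_map f φ)

lemma isIso_chainsMap_of_bijective {f : G →* H} (hf : Function.Bijective f)
    {φ : A ⟶ Rep.res f B} (hφ : Function.Bijective φ.hom) : IsIso (chainsMap f φ) := by
  have (n : ℕ) : IsIso ((chainsMap f φ).f n) := by
    rw [ConcreteCategory.isIso_iff_bijective]
    exact ⟨(Finsupp.mapRange_injective _ (map_zero _) hφ.1).comp
      (Finsupp.mapDomain_injective hf.1.comp_left),
      (Finsupp.mapRange_surjective _ (map_zero _) hφ.2).comp
      (Finsupp.mapDomain_surjective hf.2.comp_left)⟩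
  exact HomologicalComplex.Hom.isIso_of_components _

lemma isIso_chainsMap_id_of_bijective {A B : Rep.{u} k G} {φ : A ⟶ B}
    (hφ : Function.Bijective φ.hom) : IsIso (chainsMap (MonoidHom.id G) φ) :=
  isIso_chainsMap_of_bijective Function.bijective_id hφ

end Functoriality

section TrivialCoefficients

variable {G H L : Type} [Group G] [Group H] [Group L]

/-- The identity of `ℤ`, as a map of trivial representations over a group homomorphism. -/
noncomputable def trivialMap (f : G →* H) : Rep.trivial ℤ G ℤ ⟶ Rep.res f (Rep.trivial ℤ H ℤ) :=
  Rep.ofHom ⟨LinearMap.id, fun _ => rfl⟩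

/-- A group homomorphism that induces an isomorphism on integral homology below degree `m` and an
epimorphism in degree `m`. -/
def IsConnectedHom (f : G →* H) (m : ℕ) : Prop :=
  IsHomologyConnected (chainsMap f (trivialMap f)) m

variable {f : G →* H} {g : H →* L} {m : ℕ}

lemma IsConnectedHom.comp (hg : IsConnectedHom g m) (hf : IsConnectedHom f m) :
    IsConnectedHom (g.comp f) m := by
  have h := IsHomologyConnected.comp hf hg
  rwa [chainsMap_comp_eq (χ := trivialMap _) rfl fun _ => rfl] at h

lemma isConnectedHom_zero (f : G →* H) : IsConnectedHom f 0 :=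
  ⟨fun n hn => (Nat.not_lt_zero n hn).elim, epi_map_zero_of_surjective f fun a => ⟨a, rfl⟩⟩

lemma isConnectedHom_of_bijective (hf : Function.Bijective f) : IsConnectedHom f m :=
  have := isIso_chainsMap_of_bijective (φ := trivialMap f) hf Function.bijective_id
  .of_isIso

lemma isConnectedHom_inclusion_of_ge {A B : Subgroup G} {hAB : A ≤ B} (hBA : B ≤ A) :
    IsConnectedHom (Subgroup.inclusion hAB) m :=
  isConnectedHom_of_bijective ⟨Subgroup.inclusion_injective hAB, fun b => ⟨⟨b, hBA b.2⟩, rfl⟩⟩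

end TrivialCoefficients

section WordModules

variable {F W : Type} [Field F] [AddCommGroup W] [Module F W]

/-- Automorphisms of `W` act on word chains letter by letter. -/
noncomputable def wordRepresentation (G : Subgroup (W ≃ₗ[F] W)) :
    Representation ℤ G (WordChain W) where
  toFun g := mapLetters g.1
  map_one' := Finsupp.lhom_ext fun l n => by simp
  map_mul' g h := Finsupp.lhom_ext fun l n => by
    simp only [Subgroup.coe_mul, Module.End.mul_apply, mapLetters_single, List.map_map]
    rfl

/-- The word chains supported on a stable set of words. -/
def supportedWords {G : Subgroup (W ≃ₗ[F] W)} (S : Set (List W))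
    (hS : ∀ g ∈ G, ∀ l ∈ S, l.map g ∈ S) : Subrepresentation (wordRepresentation G) where
  toSubmodule := Finsupp.supported ℤ ℤ S
  apply_mem_toSubmodule g _ := mapLetters_mem_supported (hS g.1 g.2)

variable {G H L : Subgroup (W ≃ₗ[F] W)}

/-- The representation on a stable submodule of word chains. -/
noncomputable abbrev wordRep (N : Subrepresentation (wordRepresentation G)) : Rep.{0} ℤ G :=
  Rep.of N.toRepresentation

/-- A map of word chains, restricted to stable submodules over nested groups. -/
noncomputable def wordRepMap (hGH : G ≤ H) {N : Subrepresentation (wordRepresentation G)}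
    {N' : Subrepresentation (wordRepresentation H)} (φ : WordChain W →ₗ[ℤ] WordChain W)
    (hφ : ∀ x ∈ N.toSubmodule, φ x ∈ N'.toSubmodule)
    (hcomm : ∀ g ∈ G, ∀ x, φ (mapLetters g x) = mapLetters g (φ x)) :
    wordRep N ⟶ Rep.res (Subgroup.inclusion hGH) (wordRep N') :=
  Rep.ofHom ⟨φ.restrict hφ, fun g => LinearMap.ext fun x => Subtype.ext (hcomm g.1 g.2 x.1)⟩

/-- The map from the trivial representation determined by a word which is fixed by the group. -/
noncomputable def fixedWordMap (hGH : G ≤ H) {N : Subrepresentation (wordRepresentation H)}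
    (l : List W) (hl : ∀ n, Finsupp.single l n ∈ N.toSubmodule) (hfix : ∀ g ∈ G, l.map g = l) :
    Rep.trivial ℤ G ℤ ⟶ Rep.res (Subgroup.inclusion hGH) (wordRep N) :=
  Rep.ofHom ⟨(Finsupp.lsingle l).codRestrict N.toSubmodule hl, fun g => LinearMap.ext fun n =>
    Subtype.ext ((mapLetters_single (g : W ≃ₗ[F] W) l n).trans (by rw [hfix g.1 g.2]; rfl)).symm⟩

/-- Acting on words by an element that centralizes the smaller group does not change maps on
homology, because inner automorphisms act trivially. -/
lemma map_fixedWordMap_eq (hGH : G ≤ H) {N : Subrepresentation (wordRepresentation H)}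
    {l l' : List W} {hl : ∀ n, Finsupp.single l n ∈ N.toSubmodule}
    {hl' : ∀ n, Finsupp.single l' n ∈ N.toSubmodule} {hfix : ∀ g ∈ G, l.map g = l}
    {hfix' : ∀ g ∈ G, l'.map g = l'} {h : W ≃ₗ[F] W} (hH : h ∈ H) (hll' : l.map h = l')
    (hcomm : ∀ g ∈ G, Commute h g) (n : ℕ) :
    map (Subgroup.inclusion hGH) (fixedWordMap hGH (N := N) l hl hfix) n =
      map (Subgroup.inclusion hGH) (fixedWordMap hGH l' hl' hfix') n := by
  refine (Category.comp_id _).symm.trans ?_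
  rw [← map_conjMap (wordRep N) ⟨h, hH⟩ n]
  refine map_comp_eq (MonoidHom.ext fun g => Subtype.ext ?_) (fun a => Subtype.ext ?_) n
  · exact (hcomm g.1 g.2).mul_inv_cancel
  · exact (mapLetters_single h l a).trans (by rw [hll']; rfl)

section Shapiro

variable {S : Set (List W)} {hS : ∀ g ∈ H, ∀ l ∈ S, l.map g ∈ S} {l : List W}

/-- The action of a group of automorphisms of `W` on a stable set of words. -/
@[reducible]
def wordAction (hS : ∀ g ∈ H, ∀ l ∈ S, l.map g ∈ S) : MulAction H S where
  smul g x := ⟨x.1.map g.1, hS g.1 g.2 x.1 x.2⟩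
  one_smul x := Subtype.ext (List.map_id x.1)
  mul_smul g h x := Subtype.ext (List.map_map (f := h.1) (g := g.1) (l := x.1)).symm

/-- Word chains supported on `S` form the permutation representation `ℤ[S]`. -/
noncomputable def permTensorToWords (hS : ∀ g ∈ H, ∀ l ∈ S, l.map g ∈ S) :
    letI := wordAction hS
    permTensor S (Rep.trivial ℤ H ℤ) ⟶ wordRep (supportedWords S hS) :=
  letI := wordAction hS
  Rep.ofHom ⟨(Finsupp.supportedEquivFinsupp S).symm.toLinearMap, fun g =>
    Finsupp.lhom_ext fun x n => Subtype.ext <| by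
      have h (y : S) := Finsupp.supportedEquivFinsupp_symm_single (R := ℤ) S y n
      refine (congrArg (fun f => ((Finsupp.supportedEquivFinsupp (R := ℤ) S).symm f).1)
        (permTensorRepresentation_single _ g x n)).trans ((h (g • x)).trans ?_)
      exact ((congrArg (mapLetters g.1) (h x)).trans (mapLetters_single ..)).symm⟩

lemma bijective_permTensorToWords (hS : ∀ g ∈ H, ∀ l ∈ S, l.map g ∈ S) :
    Function.Bijective (permTensorToWords hS).hom :=
  (Finsupp.supportedEquivFinsupp S).symm.bijective

lemma isHomologyConnected_fixedWordMap_stabilizer (hGH : G ≤ H)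
    {hl : ∀ n, Finsupp.single l n ∈ (supportedWords S hS).toSubmodule} (hlS : l ∈ S)
    (hfix : ∀ g ∈ G, l.map g = l) (hG : ∀ g ∈ H, l.map g = l → g ∈ G)
    (htrans : ∀ l' ∈ S, ∃ g ∈ H, l.map g = l') (m : ℕ) :
    IsHomologyConnected (chainsMap (Subgroup.inclusion hGH) (fixedWordMap hGH l hl hfix)) m := by
  let := wordAction hS
  have : IsIso (chainsMap (B := wordRep (supportedWords S hS)) (MonoidHom.id H)
      (permTensorToWords hS)) :=
    isIso_chainsMap_id_of_bijective (bijective_permTensorToWords hS)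
  have hstab (g : H) : g • (⟨l, hlS⟩ : S) = ⟨l, hlS⟩ ↔ g ∈ (Subgroup.inclusion hGH).range := by
    rw [Subgroup.inclusion_range, Subgroup.mem_subgroupOf]
    refine Subtype.ext_iff.trans ⟨hG g.1 g.2, hfix g.1⟩
  have htrans' (x : S) : ∃ g : H, g • (⟨l, hlS⟩ : S) = x :=
    let ⟨g, hg, hgx⟩ := htrans x.1 x.2
    ⟨⟨g, hg⟩, Subtype.ext hgx⟩
  have hcomp : chainsMap (Subgroup.inclusion hGH) (pointInclusion (Subgroup.inclusion hGH)
        (Rep.trivial ℤ H ℤ) (⟨l, hlS⟩ : S) fun g => (hstab _).2 ⟨g, rfl⟩) ≫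
      chainsMap (B := wordRep (supportedWords S hS)) (MonoidHom.id H) (permTensorToWords hS) =
        chainsMap (Subgroup.inclusion hGH) (fixedWordMap hGH l hl hfix) :=
    chainsMap_comp_eq rfl fun n =>
      Subtype.ext (Finsupp.supportedEquivFinsupp_symm_single (R := ℤ) S ⟨l, hlS⟩ n)
  rw [← hcomp]
  exact (isHomologyConnected_pointInclusion _ htrans' (Subgroup.inclusion_injective hGH)
    hstab m).comp .of_isIso

lemma IsConnectedHom.fixedWordMap {hGH : G ≤ H} {hGL : G ≤ L} {hLH : L ≤ H} {m : ℕ}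
    (h : IsConnectedHom (Subgroup.inclusion hGL) m)
    {hl : ∀ n, Finsupp.single l n ∈ (supportedWords S hS).toSubmodule} (hlS : l ∈ S)
    (hfix : ∀ g ∈ L, l.map g = l) (hL : ∀ g ∈ H, l.map g = l → g ∈ L)
    (htrans : ∀ l' ∈ S, ∃ g ∈ H, l.map g = l') {hfix' : ∀ g ∈ G, l.map g = l} :
    IsHomologyConnected (chainsMap (Subgroup.inclusion hGH)
      (fixedWordMap hGH (N := supportedWords S hS) l hl hfix')) m := by
  rw [← chainsMap_comp_eq (f := Subgroup.inclusion hGL) (φ := trivialMap _)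
    (ψ := GLStability.fixedWordMap hLH l hl hfix) (h := Subgroup.inclusion hGH)
    (χ := GLStability.fixedWordMap hGH l hl hfix') rfl fun _ => rfl]
  exact .comp h (isHomologyConnected_fixedWordMap_stabilizer hLH hlS hfix hL htrans m)

end Shapiro

end WordModules

/-! ### Suspension of word chains -/

section WordSubrepresentations

variable {F W : Type} [Field F] [AddCommGroup W] [Module F W]

variable (F W) in
/-- The stability statement for the splittings `W = V ⊕ T` with `V` of dimension `r`. -/
def SplittingsConnected (r : ℕ) : Prop :=
  ∀ ⦃U K V T : Submodule F W⦄ (h : IsSplitting U K V T), finrank F V = r →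
    IsConnectedHom (Subgroup.inclusion h.relGL_le) r

/-- The chains of words of length `k` with letters in `t + K` that are independent modulo `U`. -/
def wordSubrep (U K : Submodule F W) (t : W) (k : ℕ) :
    Subrepresentation (wordRepresentation (relGL U K)) :=
  supportedWords (indepWords U (translate t K) k) fun _ hg _ hl => map_mem_indepWords hg hl

variable {U K : Submodule F W} {t : W} {k m : ℕ} {G : Subgroup (W ≃ₗ[F] W)} {l : List W}

/-- `relGL U K` acts transitively on independent words, with stabilizer `relGL (spanWith U l) K`. -/
lemma isHomologyConnected_fixedWordMap {hG : G ≤ relGL U K}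
    (hl : l ∈ indepWords U (translate t K) k) {hGl : G ≤ relGL (spanWith U l) K}
    (h : IsConnectedHom (Subgroup.inclusion hGl) m)
    {hl' : ∀ n, Finsupp.single l n ∈ (wordSubrep U K t k).toSubmodule}
    {hfix : ∀ g ∈ G, l.map g = l} :
    IsHomologyConnected (chainsMap (Subgroup.inclusion hG)
      (fixedWordMap (N := wordSubrep U K t k) hG l hl' hfix)) m :=
  have hle : relGL (spanWith U l) K ≤ relGL U K := relGL_mono le_spanWith le_rfl
  h.fixedWordMap (hLH := hle) hl (fun _ hg => (mem_relGL_spanWith_iff (hle hg)).1 hg)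
    (fun _ hg => (mem_relGL_spanWith_iff hg).2)
    fun _ hl' => exists_relGL_map_eq (hl.1.trans hl'.1.symm) hl.2.2 hl'.2.2 hl.2.1 hl'.2.1

end WordSubrepresentations

section Suspension

variable {W : Type} [AddCommGroup W]

/-- The map of word chains which shifts all letters by `c` and joins the result with the boundary
of the triangle with vertices `e₀`, `e₁`, `e₂`. -/
noncomputable def suspension (e₀ e₁ e₂ c : W) : WordChain W →ₗ[ℤ] WordChain W :=
  (prepend [e₀, e₁] - prepend [e₀, e₂] + prepend [e₁, e₂]) ∘ₗ mapLetters (· + c)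

lemma suspension_apply (e₀ e₁ e₂ c : W) (x : WordChain W) :
    suspension e₀ e₁ e₂ c x = prepend [e₀, e₁] (mapLetters (· + c) x) -
      prepend [e₀, e₂] (mapLetters (· + c) x) + prepend [e₁, e₂] (mapLetters (· + c) x) := rfl

lemma boundary_suspension (e₀ e₁ e₂ c : W) (x : WordChain W) :
    boundary (suspension e₀ e₁ e₂ c x) = suspension e₀ e₁ e₂ c (boundary x) := by
  have hpair (a b : W) (y : WordChain W) :
      boundary (prepend [a, b] y) =
        prepend [a, b] (boundary y) + (prepend [b] y - prepend [a] y) := by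
    simp [boundary_prepend, prefixFaces, prepend_nil]
  simp only [suspension_apply, map_add, map_sub, hpair, mapLetters_boundary]
  abel

lemma mapLetters_suspension {F : Type} [Field F] [Module F W] {g : W ≃ₗ[F] W} {e₀ e₁ e₂ c : W}
    (h₀ : g e₀ = e₀) (h₁ : g e₁ = e₁) (h₂ : g e₂ = e₂) (hc : g c = c) (x : WordChain W) :
    suspension e₀ e₁ e₂ c (mapLetters g x) = mapLetters g (suspension e₀ e₁ e₂ c x) := by
  have hshift (y : WordChain W) :
      mapLetters (· + c) (mapLetters g y) = mapLetters g (mapLetters (· + c) y) := by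
    induction y using Finsupp.induction_linear with
    | zero => simp only [map_zero]
    | add x y hx hy => simp only [map_add, hx, hy]
    | single l n => simp [Function.comp_def, hc]
  simp only [suspension_apply, map_add, map_sub, hshift, mapLetters_prepend, List.map_cons,
    List.map_nil, h₀, h₁, h₂]

end Suspension

section SuspensionData

variable {F W : Type} [Field F] [AddCommGroup W] [Module F W]

/-- Two letters of `t + K` that are independent modulo `U` and span `P` together with `U`. -/
structure IsSuspensionPair (U K : Submodule F W) (t : W) (P : Submodule F W) (a b : W) : Prop where
  mem : [a, b] ∈ indepWords U (translate t K) 2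
  span_eq : spanWith U [a, b] = P

/-- Three letters of `t + K` that are pairwise independent modulo `U` but span only a plane, and a
splitting `W = V ⊕ T` adapted to this plane. -/
structure SuspensionData (U K : Submodule F W) (t : W) (V T : Submodule F W) where
  /-- The span of `U` and the three letters. -/
  plane : Submodule F W
  e₀ : W
  e₁ : W
  e₂ : W
  /-- The shift that moves letters in `V` to letters in `t + K`. -/
  c : W
  pair₀₁ : IsSuspensionPair U K t plane e₀ e₁
  pair₀₂ : IsSuspensionPair U K t plane e₀ e₂
  pair₁₂ : IsSuspensionPair U K t plane e₁ e₂
  c_mem_translate : c ∈ translate t K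
  c_mem_plane : c ∈ plane
  splitting : IsSplitting plane K V T

variable {U K P V T V₁ T₁ : Submodule F W} {t a b c : W} {i m : ℕ} {σ : List W}

namespace IsSuspensionPair

lemma le (h : IsSuspensionPair U K t P a b) : U ≤ P :=
  h.span_eq ▸ le_spanWith

lemma left_mem (h : IsSuspensionPair U K t P a b) : a ∈ P :=
  h.span_eq ▸ mem_spanWith (by simp)

lemma right_mem (h : IsSuspensionPair U K t P a b) : b ∈ P :=
  h.span_eq ▸ mem_spanWith (by simp)

lemma append_map_add_mem (h : IsSuspensionPair U K t P a b) (hPT : P ≤ T) (hVK : V ≤ K)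
    (hct : c ∈ translate t K) (hcP : c ∈ P) (hσ : σ ∈ indepWords T (translate 0 V) i) :
    [a, b] ++ σ.map (· + c) ∈ indepWords U (translate t K) (i + 2) := by
  rw [add_comm]
  refine append_mem_indepWords h.mem ⟨by rw [List.length_map, hσ.1],
    List.forall_mem_map.2 fun v hv => ?_, ?_⟩
  · have hvK : v ∈ K := hVK (mem_translate_zero.1 (hσ.2.1 v hv))
    have := K.add_mem hvK hct
    rwa [← add_sub_assoc] at this
  · exact h.span_eq ▸ (hσ.2.2.mono hPT).map_add hcP

end IsSuspensionPair

namespace SuspensionData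

variable (D : SuspensionData U K t V T)

include D

lemma relGL_le : relGL T V ≤ relGL U K :=
  relGL_mono (D.pair₀₁.le.trans D.splitting.le_right) D.splitting.left_le

lemma append_map_add_mem (h : IsSuspensionPair U K t D.plane a b)
    (hσ : σ ∈ indepWords T (translate 0 V) i) :
    [a, b] ++ σ.map (· + D.c) ∈ indepWords U (translate t K) (i + 2) :=
  h.append_map_add_mem D.splitting.le_right D.splitting.left_le D.c_mem_translate D.c_mem_plane hσ

lemma suspension_mem_supported {x : WordChain W}
    (hx : x ∈ Finsupp.supported ℤ ℤ (indepWords T (translate 0 V) i)) :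
    suspension D.e₀ D.e₁ D.e₂ D.c x ∈
      Finsupp.supported ℤ ℤ (indepWords U (translate t K) (i + 2)) := by
  have hpair {a b : W} (h : IsSuspensionPair U K t D.plane a b) :
      prepend [a, b] (mapLetters (· + D.c) x) ∈
        Finsupp.supported ℤ ℤ (indepWords U (translate t K) (i + 2)) :=
    prepend_mem_supported (S := {l | [a, b] ++ l ∈ indepWords U (translate t K) (i + 2)})
      (fun _ hl => hl) (mapLetters_mem_supported (fun _ hσ => D.append_map_add_mem h hσ) hx)
  exact add_mem (sub_mem (hpair D.pair₀₁) (hpair D.pair₀₂)) (hpair D.pair₁₂)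

lemma suspension_equivariant {g : W ≃ₗ[F] W} (hg : g ∈ relGL T V) (x : WordChain W) :
    suspension D.e₀ D.e₁ D.e₂ D.c (mapLetters g x) =
      mapLetters g (suspension D.e₀ D.e₁ D.e₂ D.c x) :=
  have hfix {v : W} (hv : v ∈ D.plane) : g v = v := hg.1 v (D.splitting.le_right hv)
  mapLetters_suspension (hfix D.pair₀₁.left_mem) (hfix D.pair₀₁.right_mem)
    (hfix D.pair₀₂.right_mem) (hfix D.c_mem_plane) x

/-- The suspension, as a map of representations over the inclusion `relGL T V ≤ relGL U K`. -/
noncomputable def suspensionMap (i : ℕ) : wordRep (wordSubrep T V 0 i) ⟶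
    Rep.res (Subgroup.inclusion D.relGL_le) (wordRep (wordSubrep U K t (i + 2))) :=
  wordRepMap D.relGL_le (suspension D.e₀ D.e₁ D.e₂ D.c) (fun _ => D.suspension_mem_supported)
    fun _ hg => D.suspension_equivariant hg

lemma isSplitting_spanWith_map_add (hσ : σ ∈ indepWords T (translate 0 V) i)
    (h : IsSplitting (spanWith T σ) V V₁ T₁) :
    IsSplitting (spanWith D.plane (σ.map (· + D.c))) K V₁ T₁ := by
  have hσV : ∀ v ∈ σ, v ∈ V := fun v hv => mem_translate_zero.1 (hσ.2.1 v hv)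
  have hTT₁ : T ≤ T₁ := le_spanWith.trans h.le_right
  have hc : D.c ∈ spanWith D.plane (σ.map (· + D.c)) := le_spanWith D.c_mem_plane
  have hspan : Submodule.span F {v | v ∈ σ} ≤ spanWith D.plane (σ.map (· + D.c)) :=
    Submodule.span_le.2 fun v hv =>
      ((spanWith _ _).add_mem_iff_left hc).1 (mem_spanWith (List.mem_map_of_mem hv))
  refine ⟨spanWith_le (D.splitting.le_right.trans hTT₁) (List.forall_mem_map.2 fun v hv =>
      T₁.add_mem (h.le_right (mem_spanWith hv)) (hTT₁ (D.splitting.le_right D.c_mem_plane))),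
    h.left_le.trans D.splitting.left_le, h.isCompl, fun w hw => ?_⟩
  obtain ⟨v, hv, a, ha, rfl⟩ : ∃ v ∈ V, ∃ a ∈ T, v + a = w :=
    Submodule.mem_sup.1 (D.splitting.isCompl.sup_eq_top ▸ Submodule.mem_top)
  have haK : a ∈ K := (K.add_mem_iff_right (D.splitting.left_le hv)).1 hw.1
  have hvT₁ : v ∈ T₁ := (T₁.add_mem_iff_left (hTT₁ ha)).1 hw.2
  obtain ⟨a', ha', b, hb, rfl⟩ := Submodule.mem_sup.1 (h.inf_le ⟨hv, hvT₁⟩)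
  have hbV : b ∈ V := Submodule.span_le.2 hσV hb
  have ha'0 : a' = 0 := Submodule.disjoint_def.1 D.splitting.isCompl.disjoint a'
    ((V.add_mem_iff_left hbV).1 hv) ha'
  rw [ha'0, zero_add]
  exact add_mem (hspan hb) (le_spanWith (D.splitting.inf_le ⟨haK, ha⟩))

/-- The pair in front of a suspended word can be exchanged by an automorphism that commutes with
the stabilizer of the word. -/
lemma exists_commute_map_eq (hσ : σ ∈ indepWords T (translate 0 V) i)
    (h : IsSplitting (spanWith T σ) V V₁ T₁) {a' b' : W}
    (hab : IsSuspensionPair U K t D.plane a b) (hab' : IsSuspensionPair U K t D.plane a' b') :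
    ∃ g ∈ relGL U K, ([a, b] ++ σ.map (· + D.c)).map g = [a', b'] ++ σ.map (· + D.c) ∧
      ∀ x ∈ relGL T₁ V₁, Commute g x := by
  have hsplit := D.isSplitting_spanWith_map_add hσ h
  have hspan {x y : W} (hxy : IsSuspensionPair U K t D.plane x y) :
      spanWith U ([x, y] ++ σ.map (· + D.c)) ≤ T₁ := by
    rw [spanWith_append, hxy.span_eq]
    exact hsplit.le_right
  have hindep {x y : W} (hxy : IsSuspensionPair U K t D.plane x y) :
      IsIndepMod (U ⊔ V₁) ([x, y] ++ σ.map (· + D.c)) :=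
    (D.append_map_add_mem hxy hσ).2.2.sup_of_disjoint (hspan hxy) h.isCompl.disjoint
  have hmem {x y : W} (hxy : IsSuspensionPair U K t D.plane x y) :
      ∀ v ∈ [x, y] ++ σ.map (· + D.c), v ∈ translate a (K ⊓ T₁) := fun v hv =>
    ⟨sub_mem_of_mem_translate ((D.append_map_add_mem hxy hσ).2.1 v hv)
        (hab.mem.2.1 a List.mem_cons_self),
      T₁.sub_mem (hspan hxy (mem_spanWith hv)) (hspan hab (mem_spanWith (by simp)))⟩
  obtain ⟨g, hg, hgmap⟩ := exists_relGL_map_eq (by simp) (hindep hab) (hindep hab') (hmem hab)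
    (hmem hab')
  exact ⟨g, relGL_mono le_sup_left inf_le_left hg, hgmap,
    fun x hx => relGL_commute (relGL_mono le_sup_right inf_le_right hg) hx⟩

lemma isSplitting_spanWith_pair (hσ : σ ∈ indepWords T (translate 0 V) i)
    (h : IsSplitting (spanWith T σ) V V₁ T₁) (hab : IsSuspensionPair U K t D.plane a b) :
    IsSplitting (spanWith U ([a, b] ++ σ.map (· + D.c))) K V₁ T₁ := by
  rw [spanWith_append, hab.span_eq]
  exact D.isSplitting_spanWith_map_add hσ h

lemma relGL_le_of_isSplitting (hσ : σ ∈ indepWords T (translate 0 V) i)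
    (h : IsSplitting (spanWith T σ) V V₁ T₁) : relGL T₁ V₁ ≤ relGL U K :=
  (D.isSplitting_spanWith_pair hσ h D.pair₀₁).relGL_le.trans (relGL_mono le_spanWith le_rfl)

/-- The map from the trivial representation determined by one of the three words of the
suspension of `σ`. -/
noncomputable def pairMap (hσ : σ ∈ indepWords T (translate 0 V) i)
    (h : IsSplitting (spanWith T σ) V V₁ T₁) (hab : IsSuspensionPair U K t D.plane a b) :
    Rep.trivial ℤ (relGL T₁ V₁) ℤ ⟶ Rep.res (Subgroup.inclusion (D.relGL_le_of_isSplitting hσ h))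
      (wordRep (wordSubrep U K t (i + 2))) :=
  fixedWordMap _ ([a, b] ++ σ.map (· + D.c))
    (fun n => Finsupp.single_mem_supported ℤ n (D.append_map_add_mem hab hσ))
    fun _ hg => (mem_relGL_spanWith_iff (D.relGL_le_of_isSplitting hσ h hg)).1
      ((D.isSplitting_spanWith_pair hσ h hab).relGL_le hg)

lemma homologyMap_pairMap_eq (hσ : σ ∈ indepWords T (translate 0 V) i)
    (h : IsSplitting (spanWith T σ) V V₁ T₁) {a b a' b' : W}
    (hab : IsSuspensionPair U K t D.plane a b) (hab' : IsSuspensionPair U K t D.plane a' b')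
    (n : ℕ) : homologyMap (chainsMap _ (D.pairMap hσ h hab)) n =
      homologyMap (chainsMap _ (D.pairMap hσ h hab')) n :=
  let ⟨_, hg, hgmap, hcomm⟩ := D.exists_commute_map_eq hσ h hab hab'
  map_fixedWordMap_eq _ hg hgmap hcomm n

lemma chainsMap_fixedWordMap_comp_suspensionMap {hGV : relGL T₁ V₁ ≤ relGL T V}
    (hσ : σ ∈ indepWords T (translate 0 V) i) (h : IsSplitting (spanWith T σ) V V₁ T₁)
    {hl hfix} :
    chainsMap (Subgroup.inclusion hGV)
        (fixedWordMap (N := wordSubrep T V 0 i) hGV σ hl hfix) ≫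
        chainsMap (Subgroup.inclusion D.relGL_le) (D.suspensionMap i) =
      chainsMap _ (D.pairMap hσ h D.pair₀₁) - chainsMap _ (D.pairMap hσ h D.pair₀₂) +
        chainsMap _ (D.pairMap hσ h D.pair₁₂) := by
  rw [← chainsMap_comp]
  refine chainsMap_sub_add fun x => Subtype.ext ?_
  change suspension D.e₀ D.e₁ D.e₂ D.c (.single σ x) = _
  simp only [suspension_apply, mapLetters_single, prepend_single]
  rfl

/-- On homology the three words in the suspension of `σ` have the same effect, so their alternating
sum acts like the first one. -/
lemma homologyMap_fixedWordMap_comp_suspensionMap {hGV : relGL T₁ V₁ ≤ relGL T V}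
    (hσ : σ ∈ indepWords T (translate 0 V) i) (h : IsSplitting (spanWith T σ) V V₁ T₁)
    {hl hfix} (n : ℕ) :
    homologyMap (chainsMap _ (D.pairMap hσ h D.pair₀₁)) n =
      homologyMap (chainsMap (Subgroup.inclusion hGV)
        (fixedWordMap (N := wordSubrep T V 0 i) hGV σ hl hfix) ≫
        chainsMap (Subgroup.inclusion D.relGL_le) (D.suspensionMap i)) n := by
  rw [D.chainsMap_fixedWordMap_comp_suspensionMap hσ h, homologyMap_add, homologyMap_sub,
    ← D.homologyMap_pairMap_eq hσ h D.pair₀₁ D.pair₀₂,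
    ← D.homologyMap_pairMap_eq hσ h D.pair₀₁ D.pair₁₂, sub_self, zero_add]

variable [FiniteDimensional F W]

lemma finrank_add_finrank : finrank F V + finrank F U + 2 =
    finrank F ↥(U ⊔ Submodule.span F (translate t K)) := by
  have hletters := D.pair₀₁.mem.2.1
  have hplane := D.pair₀₁.mem.2.2.finrank_spanWith
  rw [D.pair₀₁.span_eq, D.pair₀₁.mem.1] at hplane
  have hsup := spanWith_sup_span (U := U) hletters
  rw [D.pair₀₁.span_eq, sup_span_translate D.c_mem_translate D.c_mem_plane] at hsup
  rw [← hsup, ← D.splitting.finrank_add_finrank, hplane, add_assoc]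

omit D in
lemma finrank_sup_span_translate_zero (h : IsCompl V T) :
    finrank F ↥(T ⊔ Submodule.span F (translate 0 V)) = finrank F V + finrank F T := by
  rw [sup_span_translate self_mem_translate T.zero_mem, sup_comm,
    ← Submodule.finrank_sup_add_finrank_inf_eq, h.inf_eq_bot, finrank_bot, add_zero]

lemma isHomologyConnected_suspensionMap (hm : i + m ≤ finrank F V)
    (hQ : ∀ r ≤ finrank F V, SplittingsConnected F W r) :
    IsHomologyConnected (chainsMap (Subgroup.inclusion D.relGL_le) (D.suspensionMap i)) m := by
  refine IsHomologyConnected.mono (m := finrank F V - i) ?_ (by lia)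
  obtain ⟨σ, hσ⟩ : ∃ σ, σ ∈ indepWords T (translate 0 V) i := exists_mem_indepWords <| by
    have := finrank_sup_span_translate_zero D.splitting.isCompl
    lia
  obtain ⟨V₁, T₁, h⟩ := exists_isSplitting (spanWith T σ) V
  have hV₁ : finrank F V₁ = finrank F V - i := by
    have hspan := hσ.2.2.finrank_spanWith
    have hsup := spanWith_sup_span (U := T) hσ.2.1
    rw [sup_span_translate self_mem_translate (zero_mem (spanWith T σ))] at hsup
    have hrank := h.finrank_add_finrank
    rw [hsup, finrank_sup_span_translate_zero D.splitting.isCompl, hspan, hσ.1] at hrank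
    lia
  have hconn := hQ (finrank F V - i) (Nat.sub_le _ _)
  have hGV : relGL T₁ V₁ ≤ relGL T V := h.relGL_le.trans (relGL_mono le_spanWith le_rfl)
  have hα : IsHomologyConnected (chainsMap (Subgroup.inclusion hGV)
      (fixedWordMap (N := wordSubrep T V 0 i) hGV σ
        (fun n => Finsupp.single_mem_supported ℤ n hσ)
        fun _ hg => (mem_relGL_spanWith_iff (hGV hg)).1 (h.relGL_le hg))) (finrank F V - i) :=
    isHomologyConnected_fixedWordMap hσ (hconn h hV₁)
  have hβ : IsHomologyConnected (chainsMap _ (D.pairMap hσ h D.pair₀₁)) (finrank F V - i) :=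
    isHomologyConnected_fixedWordMap (D.append_map_add_mem D.pair₀₁ hσ)
      (hconn (D.isSplitting_spanWith_pair hσ h D.pair₀₁) hV₁)
  exact hα.of_comp (hβ.congr (D.homologyMap_fixedWordMap_comp_suspensionMap hσ h))

end SuspensionData

end SuspensionData

/-! ### Dimension shifting along the complex of words -/

section Boundaries

variable {F W : Type} [Field F] [AddCommGroup W] [Module F W]

/-- The boundaries of the word chains in `wordSubrep U K t k`. -/
noncomputable def boundarySubrep (U K : Submodule F W) (t : W) (k : ℕ) :
    Subrepresentation (wordRepresentation (relGL U K)) where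
  toSubmodule := (wordSubrep U K t k).toSubmodule.map boundary
  apply_mem_toSubmodule g := by
    rintro _ ⟨x, hx, rfl⟩
    exact ⟨_, (wordSubrep U K t k).apply_mem_toSubmodule g hx, (mapLetters_boundary g.1 x).symm⟩

variable {U K V T : Submodule F W} {t w : W} {i k m : ℕ}

lemma boundarySubrep_succ_le :
    (boundarySubrep U K t (k + 1)).toSubmodule ≤ (wordSubrep U K t k).toSubmodule := by
  rintro _ ⟨x, hx, rfl⟩
  exact boundary_mem_indepWords hx

lemma eq_zero_of_mem_boundarySubrep_zero {x : WordChain W}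
    (hx : x ∈ (boundarySubrep U K t 0).toSubmodule) : x = 0 := by
  obtain ⟨y, hy, rfl⟩ := hx
  refine (Submodule.mem_bot ℤ).1 (map_mem_of_mem_supported _ ⊥ (fun l hl => ?_) hy)
  rw [List.length_eq_zero_iff.1 hl.1, boundary_single, wordBoundary, smul_zero]
  exact zero_mem _

/-- The boundary map, from word chains onto boundaries. -/
noncomputable def boundaryMap (U K : Submodule F W) (t : W) (k : ℕ) :
    wordRep (wordSubrep U K t k) ⟶ wordRep (boundarySubrep U K t k) :=
  Rep.ofHom ⟨boundary.restrict fun _ => Submodule.mem_map_of_mem, fun g =>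
    LinearMap.ext fun x => Subtype.ext (mapLetters_boundary g.1 x.1).symm⟩

lemma surjective_boundaryMap : Function.Surjective (boundaryMap U K t k).hom := by
  rintro ⟨_, x, hx, rfl⟩
  exact ⟨⟨x, hx⟩, rfl⟩

/-- The sequence `0 → B_{k+1} → C_k → B_k → 0` of boundaries and chains. -/
noncomputable def boundaryShortComplex (U K : Submodule F W) (t : W) (k : ℕ) :
    ShortComplex (Rep.{0} ℤ (relGL U K)) :=
  .mk (X₁ := wordRep (boundarySubrep U K t (k + 1)))
    (Rep.ofHom ⟨Submodule.inclusion boundarySubrep_succ_le, fun _ => rfl⟩)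
    (boundaryMap U K t k) <| by
      ext ⟨_, x, hx, rfl⟩ : 3
      exact Subtype.ext (boundary_boundary x)

lemma boundaryShortComplex_shortExact [FiniteDimensional F W]
    (hk : finrank F U + k < finrank F ↥(U ⊔ Submodule.span F (translate t K))) :
    (boundaryShortComplex U K t k).ShortExact := by
  refine shortExact_of_exact (Submodule.inclusion_injective boundarySubrep_succ_le) (fun x => ?_)
    surjective_boundaryMap
  refine ⟨fun hx => ?_, ?_⟩
  · obtain ⟨y, hy, hyx⟩ := wordsAcyclic k U hk x.1 x.2 (congrArg Subtype.val hx)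
    exact ⟨⟨x.1, y, hy, hyx⟩, rfl⟩
  · rintro ⟨⟨_, y, hy, rfl⟩, rfl⟩
    exact Subtype.ext (boundary_boundary y)

/-- The words of length `1` have the empty word as common boundary. -/
lemma mem_boundarySubrep_one (hw : [w] ∈ indepWords U (translate t K) 1) (n : ℤ) :
    Finsupp.single [] n ∈ (boundarySubrep U K t 1).toSubmodule :=
  ⟨.single [w] n, Finsupp.single_mem_supported ℤ n hw, by simp [wordBoundary]⟩

lemma isIso_chainsMap_fixedWordMap_nil (hw : [w] ∈ indepWords U (translate t K) 1) :
    IsIso (chainsMap (Subgroup.inclusion le_rfl) (fixedWordMap (N := boundarySubrep U K t 1)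
      le_rfl [] (mem_boundarySubrep_one hw) fun _ _ => rfl)) := by
  refine isIso_chainsMap_of_bijective ⟨Subgroup.inclusion_injective _, fun g => ⟨g, rfl⟩⟩
    ⟨fun m n h => Finsupp.single_injective [] (congrArg Subtype.val h), fun x => ?_⟩
  have hsupp : x.1.support ⊆ {[]} := fun l hl =>
    Finset.mem_singleton.2 (List.length_eq_zero_iff.1 (boundarySubrep_succ_le x.2 hl).1)
  obtain ⟨n, hn⟩ := Finsupp.support_subset_singleton'.1 hsupp
  exact ⟨n, Subtype.ext hn.symm⟩

namespace SuspensionData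

variable (D : SuspensionData U K t V T)

/-- The suspension on boundaries. -/
noncomputable def boundarySuspensionMap (i : ℕ) : wordRep (boundarySubrep T V 0 i) ⟶
    Rep.res (Subgroup.inclusion D.relGL_le) (wordRep (boundarySubrep U K t (i + 2))) :=
  wordRepMap D.relGL_le (suspension D.e₀ D.e₁ D.e₂ D.c)
    (by
      rintro _ ⟨x, hx, rfl⟩
      exact ⟨_, D.suspension_mem_supported hx, boundary_suspension ..⟩)
    fun _ hg => D.suspension_equivariant hg

variable [FiniteDimensional F W]

lemma isHomologyConnected_boundarySuspensionMap
    (hQ : ∀ r ≤ finrank F V, SplittingsConnected F W r) (hm : i + m ≤ finrank F V) :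
    IsHomologyConnected
      (chainsMap (Subgroup.inclusion D.relGL_le) (D.boundarySuspensionMap i)) m := by
  have hchains := D.isHomologyConnected_suspensionMap hm hQ
  induction m generalizing i with
  | zero =>
    have hboundary {U K : Submodule F W} {t : W} {k : ℕ} :
        IsHomologyConnected ((chainsFunctor ℤ _).map (boundaryMap U K t k)) 0 :=
      ⟨fun n hn => (Nat.not_lt_zero n hn).elim, epi_map_zero_of_surjective (MonoidHom.id _)
        (B := wordRep (boundarySubrep U K t k)) surjective_boundaryMap⟩
    have hsquare := chainsFunctor_map_comp_chainsMap (φ := D.suspensionMap i)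
      (φ' := D.boundarySuspensionMap i) (α := boundaryMap T V 0 i)
      (β := boundaryMap U K t (i + 2)) (Subgroup.inclusion D.relGL_le)
      fun x => Subtype.ext (boundary_suspension D.e₀ D.e₁ D.e₂ D.c x.1).symm
    refine hboundary.of_comp ?_
    rw [hsquare]
    exact hchains.comp hboundary
  | succ m ih =>
    have hrank := D.finrank_add_finrank
    have hrank' := finrank_sup_span_translate_zero D.splitting.isCompl
    refine isHomologyConnected_of_shortExact (φ₁ := D.boundarySuspensionMap (i + 1))
      (φ₂ := D.suspensionMap i) (φ₃ := D.boundarySuspensionMap i)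
      (boundaryShortComplex_shortExact (by lia))
      (boundaryShortComplex_shortExact (by lia)) _ (fun _ => rfl)
      (fun x => Subtype.ext (boundary_suspension _ _ _ _ x.1)) hchains fun n hn => ?_
    obtain rfl := Nat.succ_injective hn
    exact ih (by lia) (D.isHomologyConnected_suspensionMap (by lia) hQ)

end SuspensionData

end Boundaries

section StabilizingByLine

variable {F W : Type} [Field F] [AddCommGroup W] [Module F W]
variable {U K V T : Submodule F W} {t w a b c d : W}

lemma sup_span_translate_eq :
    U ⊔ Submodule.span F (translate t K) = U ⊔ K ⊔ F ∙ t := by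
  have ht : F ∙ t ≤ Submodule.span F (translate t K) :=
    Submodule.span_mono (Set.singleton_subset_iff.2 self_mem_translate)
  have h := sup_span_translate (U := U ⊔ F ∙ t) (K := K) self_mem_translate
    (Submodule.mem_sup_right (Submodule.mem_span_singleton_self t))
  rwa [sup_assoc, sup_eq_right.2 ht, sup_right_comm] at h

lemma isIndepMod_pair_iff : IsIndepMod U [a, b] ↔ LinearIndependent F ![U.mkQ a, U.mkQ b] := by
  have hb : b ∈ U ⊔ F ∙ a ↔ ∃ r : F, r • U.mkQ a = U.mkQ b := by
    rw [← Submodule.comap_map_mkQ, Submodule.map_span, Set.image_singleton, Submodule.mem_comap,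
      Submodule.mem_span_singleton]
  have ha : a ∈ U ↔ U.mkQ a = 0 := by simp
  by_cases ha0 : U.mkQ a = 0
  · simp only [IsIndepMod, ha, ha0, not_true, false_and, false_iff]
    exact fun h => h.ne_zero 0 rfl
  · simp only [IsIndepMod, LinearIndependent.pair_iff' ha0, ha, hb, ha0, not_false_eq_true,
      true_and, and_true, not_exists, ne_eq]

lemma chainsMap_fixedWordMap_comp_boundaryMap (hw : [w] ∈ indepWords U (translate t K) 1)
    {G : Subgroup (W ≃ₗ[F] W)} {hG : G ≤ relGL U K}
    {hw' : ∀ n, Finsupp.single [w] n ∈ (wordSubrep U K t 1).toSubmodule}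
    {hfix : ∀ g ∈ G, [w].map g = [w]} :
    chainsMap (Subgroup.inclusion hG) (fixedWordMap (N := wordSubrep U K t 1) hG [w] hw' hfix) ≫
        (chainsFunctor ℤ _).map (boundaryMap U K t 1) =
      chainsMap (Subgroup.inclusion hG) (fixedWordMap (N := boundarySubrep U K t 1) hG []
        (mem_boundarySubrep_one hw) fun _ _ => rfl) :=
  chainsMap_comp_chainsFunctor_map (φ := fixedWordMap (N := wordSubrep U K t 1) hG [w] hw' hfix)
    (φ' := fixedWordMap (N := boundarySubrep U K t 1) hG [] (mem_boundarySubrep_one hw)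
      fun _ _ => rfl) (β := boundaryMap U K t 1) (Subgroup.inclusion hG) fun n =>
    Subtype.ext (show Finsupp.single [] n = boundary (Finsupp.single [w] n) by simp [wordBoundary])

lemma isConnectedHom_of_fixedWordMap_nil (hw : [w] ∈ indepWords U (translate t K) 1)
    {G : Subgroup (W ≃ₗ[F] W)} {hG : G ≤ relGL U K} {m : ℕ}
    (h : IsHomologyConnected (chainsMap (Subgroup.inclusion hG)
      (fixedWordMap (N := boundarySubrep U K t 1) hG [] (mem_boundarySubrep_one hw)
        fun _ _ => rfl)) m) : IsConnectedHom (Subgroup.inclusion hG) m := by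
  have hcomp : chainsMap (Subgroup.inclusion hG) (trivialMap _) ≫
      chainsMap (Subgroup.inclusion le_rfl) (fixedWordMap (N := boundarySubrep U K t 1) le_rfl []
        (mem_boundarySubrep_one hw) fun _ _ => rfl) =
      chainsMap (Subgroup.inclusion hG) (fixedWordMap (N := boundarySubrep U K t 1) hG []
        (mem_boundarySubrep_one hw) fun _ _ => rfl) :=
    chainsMap_comp_eq rfl fun _ => rfl
  have := isIso_chainsMap_fixedWordMap_nil hw
  rw [← hcomp] at h
  exact h.of_comp_isIso

variable [FiniteDimensional F W]

lemma SuspensionData.isZero_homology_boundarySubrep_two (D : SuspensionData U K t V T)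
    (hQ : ∀ r ≤ finrank F V, SplittingsConnected F W r) {n : ℕ} (hn : n ≤ finrank F V) :
    IsZero ((inhomogeneousChains (wordRep (boundarySubrep U K t 2))).homology n) := by
  have hepi := (D.isHomologyConnected_boundarySuspensionMap (i := 0) hQ
    ((zero_add n).trans_le hn)).epi le_rfl
  have hzero : chainsMap (Subgroup.inclusion D.relGL_le) (D.boundarySuspensionMap 0) = 0 := by
    have hmap (x) : (D.boundarySuspensionMap 0).hom x = 0 := by
      have hx : x = 0 := Subtype.ext (eq_zero_of_mem_boundarySubrep_zero x.2)
      rw [hx, map_zero]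
    ext n x a
    simp [chainsMap_f, hmap]
  rw [hzero] at hepi
  exact IsZero.of_epi_eq_zero _
    (homologyMap_zero (inhomogeneousChains (wordRep (boundarySubrep T V 0 0))) _ n)

lemma SuspensionData.isConnectedHom_inclusion (D : SuspensionData U K t V T)
    (hQ : ∀ r ≤ finrank F V, SplittingsConnected F W r) (hw : w ∈ translate t K) (hwU : w ∉ U) :
    IsConnectedHom (Subgroup.inclusion
      (relGL_mono le_sup_left le_rfl : relGL (U ⊔ F ∙ w) K ≤ relGL U K)) (finrank F V + 1) := by
  have hspan : spanWith U [w] = U ⊔ F ∙ w := by rw [spanWith_cons, spanWith_nil]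
  have hword : [w] ∈ indepWords U (translate t K) 1 := ⟨rfl, by simpa using hw, hwU, trivial⟩
  have hle : relGL (U ⊔ F ∙ w) K ≤ relGL (spanWith U [w]) K := by rw [hspan]
  have hid : IsConnectedHom (Subgroup.inclusion hle) (finrank F V + 1) :=
    isConnectedHom_inclusion_of_ge (by rw [hspan])
  have hfix : ∀ g ∈ relGL (U ⊔ F ∙ w) K, [w].map g = [w] := fun g hg =>
    (mem_relGL_spanWith_iff (relGL_mono le_sup_left le_rfl hg)).1 (hle hg)
  have hboundary : IsHomologyConnected ((chainsFunctor ℤ _).map (boundaryMap U K t 1))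
      (finrank F V + 1) := by
    have hrank := D.finrank_add_finrank
    exact .of_isZero_homology (map_chainsFunctor_shortExact
      (boundaryShortComplex_shortExact (t := t) (k := 1) (by lia)))
      fun n hn => D.isZero_homology_boundarySubrep_two hQ hn
  have hpoint := isHomologyConnected_fixedWordMap (hG := relGL_mono le_sup_left le_rfl) hword hid
    (hl' := fun n => Finsupp.single_mem_supported ℤ n hword) (hfix := hfix)
  refine isConnectedHom_of_fixedWordMap_nil hword ?_
  rw [← chainsMap_fixedWordMap_comp_boundaryMap hword]
  exact hpoint.comp hboundary

lemma IsSuspensionPair.of_mem (hab : IsIndepMod U [a, b])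
    (hcd : [c, d] ∈ indepWords U (translate t K) 2) (hc : c ∈ spanWith U [a, b])
    (hd : d ∈ spanWith U [a, b]) : IsSuspensionPair U K t (spanWith U [a, b]) c d :=
  ⟨hcd, Submodule.eq_of_le_of_finrank_eq (spanWith_le le_spanWith (by simp [hc, hd]))
    (hcd.2.2.finrank_spanWith.trans hab.finrank_spanWith.symm)⟩

lemma isConnectedHom_sup_span {e₀ e₁ e₂ : W} {m : ℕ} (h₀ : e₀ ∈ translate t K)
    (h₁ : e₁ ∈ translate t K) (h₂ : e₂ ∈ translate t K) (h₀₁ : IsIndepMod U [e₀, e₁])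
    (h₀₂ : IsIndepMod U [e₀, e₂]) (h₁₂ : IsIndepMod U [e₁, e₂]) (he₂ : e₂ ∈ spanWith U [e₀, e₁])
    (hc : c ∈ translate t K) (hc' : c ∈ spanWith U [e₀, e₁])
    (hm : finrank F U + (m + 2) = finrank F ↥(U ⊔ Submodule.span F (translate t K)))
    (hQ : ∀ r ≤ m, SplittingsConnected F W r) :
    IsConnectedHom (Subgroup.inclusion
      (relGL_mono le_sup_left le_rfl : relGL (U ⊔ F ∙ e₀) K ≤ relGL U K)) (m + 1) := by
  obtain ⟨V, T, hsplit⟩ := exists_isSplitting (spanWith U [e₀, e₁]) K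
  have he₀ : e₀ ∈ spanWith U [e₀, e₁] := mem_spanWith (by simp)
  have he₁ : e₁ ∈ spanWith U [e₀, e₁] := mem_spanWith (by simp)
  let D : SuspensionData U K t V T :=
    { plane := spanWith U [e₀, e₁]
      e₀ := e₀
      e₁ := e₁
      e₂ := e₂
      c := c
      pair₀₁ := ⟨⟨rfl, by simp [h₀, h₁], h₀₁⟩, rfl⟩
      pair₀₂ := .of_mem h₀₁ ⟨rfl, by simp [h₀, h₂], h₀₂⟩ he₀ he₂
      pair₁₂ := .of_mem h₀₁ ⟨rfl, by simp [h₁, h₂], h₁₂⟩ he₁ he₂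
      c_mem_translate := hc
      c_mem_plane := hc'
      splitting := hsplit }
  obtain rfl : m = finrank F V := by
    have := D.finrank_add_finrank
    lia
  exact D.isConnectedHom_inclusion hQ h₀ h₀₁.1

/-- The triangle has vertices `t`, `t + f` and `t + μ f` with `f ∈ K` and `μ ≠ 0, 1`. -/
lemma isConnectedHom_sup_span_of_notMem (hF : ∃ x : F, x ≠ 0 ∧ x ≠ 1) {m : ℕ} (ht : t ∉ U ⊔ K)
    (hm : finrank F U + m = finrank F ↥(U ⊔ K)) (hQ : ∀ r < m, SplittingsConnected F W r) :
    IsConnectedHom (Subgroup.inclusion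
      (relGL_mono le_sup_left le_rfl : relGL (U ⊔ F ∙ t) K ≤ relGL U K)) m := by
  rcases m with _ | m
  · exact isConnectedHom_zero _
  obtain ⟨μ, hμ0, hμ1⟩ := hF
  obtain ⟨f, hfK, hfU⟩ : ∃ f ∈ K, f ∉ U := by
    by_contra! hKU
    rw [sup_eq_left.2 hKU] at hm
    lia
  have htf : LinearIndependent F ![U.mkQ t, U.mkQ f] := isIndepMod_pair_iff.1 <|
    IsIndepMod.cons (l := [f]) ⟨hfU, trivial⟩ fun h =>
      ht (spanWith_le le_sup_left (by simpa using Submodule.mem_sup_right hfK) h)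
  have hspan : t + μ • f ∈ spanWith U [t, t + f] := by
    rw [show t + μ • f = (1 - μ) • t + μ • (t + f) by module]
    exact add_mem (Submodule.smul_mem _ _ (mem_spanWith (by simp)))
      (Submodule.smul_mem _ _ (mem_spanWith (by simp)))
  refine isConnectedHom_sup_span (c := t) (e₁ := t + f) (e₂ := t + μ • f) self_mem_translate
    (by simpa [translate]) (by simpa [translate] using K.smul_mem μ hfK)
    (isIndepMod_pair_iff.2 ?_) (isIndepMod_pair_iff.2 ?_) (isIndepMod_pair_iff.2 ?_) hspan
    self_mem_translate (mem_spanWith (by simp)) ?_ fun r hr => hQ r (by lia)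
  · simpa using htf
  · simpa using (LinearIndependent.pair_add_smul_add_smul_iff 1 0 1 μ).2 ⟨htf, by simpa using hμ0⟩
  · simpa using (LinearIndependent.pair_add_smul_add_smul_iff 1 1 1 μ).2 ⟨htf, by simpa using hμ1⟩
  · rw [sup_span_translate_eq, Submodule.finrank_sup_span_singleton ht, ← hm]
    ring

/-- The triangle has vertices `w`, `f` and `w + f` with `f ∈ K`. -/
lemma isConnectedHom_sup_span_of_mem {m : ℕ} (hw : w ∈ K) (hwU : w ∉ U)
    (hm : finrank F U + (m + 1) = finrank F ↥(U ⊔ K)) (hQ : ∀ r < m, SplittingsConnected F W r) :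
    IsConnectedHom (Subgroup.inclusion
      (relGL_mono le_sup_left le_rfl : relGL (U ⊔ F ∙ w) K ≤ relGL U K)) m := by
  rcases m with _ | m
  · exact isConnectedHom_zero _
  obtain ⟨f, hfK, hfU⟩ : ∃ f ∈ K, f ∉ U ⊔ F ∙ w := by
    by_contra! hKU
    have hle := Submodule.finrank_mono (sup_le (le_sup_left : U ≤ U ⊔ F ∙ w) hKU)
    rw [Submodule.finrank_sup_span_singleton hwU] at hle
    lia
  have hwf : IsIndepMod U [w, f] := ⟨hwU, hfU, trivial⟩
  have hwf' := isIndepMod_pair_iff.1 hwf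
  refine isConnectedHom_sup_span (c := 0) (e₁ := f) (e₂ := w + f) (mem_translate_zero.2 hw)
    (mem_translate_zero.2 hfK) (mem_translate_zero.2 (add_mem hw hfK)) hwf
    (isIndepMod_pair_iff.2 ?_) (isIndepMod_pair_iff.2 ?_)
    (add_mem (mem_spanWith (by simp)) (mem_spanWith (by simp))) self_mem_translate (zero_mem _)
    ?_ fun r hr => hQ r (by lia)
  · simpa using hwf'
  · rw [LinearIndependent.pair_symm_iff]
    simpa using hwf'
  · rw [sup_span_translate self_mem_translate U.zero_mem, ← hm]

end StabilizingByLine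

section Transport

variable {G H G' H' : Type} [Group G] [Group H] [Group G'] [Group H'] {m : ℕ}

lemma IsConnectedHom.inclusion_trans {A B C : Subgroup G} {hAB : A ≤ B} {hBC : B ≤ C}
    (hAB' : IsConnectedHom (Subgroup.inclusion hAB) m)
    (hBC' : IsConnectedHom (Subgroup.inclusion hBC) m) :
    IsConnectedHom (Subgroup.inclusion (hAB.trans hBC)) m := by
  have hcomp : (Subgroup.inclusion hBC).comp (Subgroup.inclusion hAB) =
    Subgroup.inclusion (hAB.trans hBC) := rfl
  exact hcomp ▸ hBC'.comp hAB'

lemma IsConnectedHom.of_square {f : G →* H} {f' : G' →* H'} {α : G →* G'} {β : H →* H'}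
    (hα : Function.Bijective α) (hβ : Function.Bijective β) (hcomm : f'.comp α = β.comp f)
    (hf' : IsConnectedHom f' m) : IsConnectedHom f m := by
  have hcomp : chainsMap f (trivialMap f) ≫ chainsMap β (trivialMap β) =
    chainsMap (β.comp f) (trivialMap _) := chainsMap_comp_eq rfl fun _ => rfl
  have := isIso_chainsMap_of_bijective (φ := trivialMap β) hβ Function.bijective_id
  have h := hf'.comp (isConnectedHom_of_bijective hα)
  rw [hcomm, IsConnectedHom, ← hcomp] at h
  exact h.of_comp_isIso

lemma IsConnectedHom.of_comap {e : G →* G'} (he : Function.Bijective e) {A B : Subgroup G}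
    {A' B' : Subgroup G'} (hA : A'.comap e = A) (hB : B'.comap e = B) (hAB : A ≤ B)
    (hAB' : A' ≤ B') (h : IsConnectedHom (Subgroup.inclusion hAB') m) :
    IsConnectedHom (Subgroup.inclusion hAB) m := by
  subst hA hB
  have hbij (C : Subgroup G') : Function.Bijective (e.subgroupComap C) :=
    ⟨fun _ _ hab => Subtype.ext (he.1 (congrArg Subtype.val hab)),
      e.subgroupComap_surjective_of_surjective C he.2⟩
  exact h.of_square (hbij A') (hbij B') rfl

end Transport

/-! ### The dual space and the induction on dimension -/

section Duality

variable {F W : Type} [Field F] [AddCommGroup W] [Module F W] {U K V T : Submodule F W}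

/-- The contragredient action of the automorphisms of `W` on the dual space. -/
def contragredient : (W ≃ₗ[F] W) →* (Dual F W ≃ₗ[F] Dual F W) where
  toFun g := g⁻¹.dualMap
  map_one' := rfl
  map_mul' g h := by rw [mul_inv_rev]; rfl

lemma contragredient_apply (g : W ≃ₗ[F] W) (φ : Dual F W) (w : W) :
    contragredient g φ w = φ (g⁻¹ w) := rfl

lemma comap_contragredient_relGL (U K : Submodule F W) :
    (relGL K.dualAnnihilator U.dualAnnihilator).comap contragredient = relGL U K := by
  ext g
  have hsub (φ : Dual F W) (w : W) : (contragredient g⁻¹ φ - φ) w = φ (g w - w) := by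
    rw [LinearMap.sub_apply, contragredient_apply, inv_inv, map_sub]
  rw [← inv_mem_iff (x := g), Subgroup.mem_comap]
  refine and_comm.trans (and_congr ⟨fun h u hu => ?_, fun h φ => ?_⟩
    ⟨fun h w => ?_, fun h φ hφ => ?_⟩)
  · refine sub_eq_zero.1 ((forall_dual_apply_eq_zero_iff F _).1 fun φ => ?_)
    rw [← hsub]
    exact (Submodule.mem_dualAnnihilator _).1 (h φ) u hu
  · refine (Submodule.mem_dualAnnihilator _).2 fun u hu => ?_
    rw [hsub, h u hu, sub_self, map_zero]
  · rw [← Subspace.forall_mem_dualAnnihilator_apply_eq_zero_iff]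
    intro φ hφ
    rw [← hsub, h φ hφ, sub_self, LinearMap.zero_apply]
  · refine sub_eq_zero.1 (LinearMap.ext fun w => ?_)
    rw [hsub]
    exact (Submodule.mem_dualAnnihilator _).1 hφ _ (h w)

lemma contragredient_bijective [FiniteDimensional F W] :
    Function.Bijective (contragredient : (W ≃ₗ[F] W) →* _) := by
  refine ⟨(injective_iff_map_eq_one _).2 fun g hg => inv_eq_one.1 (LinearEquiv.ext fun w => ?_),
    fun h => ?_⟩
  · refine sub_eq_zero.1 ((forall_dual_apply_eq_zero_iff F _).1 fun φ => ?_)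
    rw [map_sub, ← contragredient_apply, hg, sub_eq_zero]
    rfl
  · let g := (evalEquiv F W).trans (h.dualMap.trans (evalEquiv F W).symm)
    refine ⟨g⁻¹, LinearEquiv.ext fun φ => LinearMap.ext fun w => ?_⟩
    rw [contragredient_apply, inv_inv]
    exact apply_evalEquiv_symm_apply _ _ _ _

end Duality

section Induction

variable {F W : Type} [Field F] [AddCommGroup W] [Module F W] {U K V T : Submodule F W}

lemma IsSplitting.sup_span (h : IsSplitting U K V T) {t : W} (ht : t ∈ T) :
    IsSplitting (U ⊔ F ∙ t) K V T :=
  ⟨sup_le h.le_right ((Submodule.span_singleton_le_iff_mem _ _).2 ht), h.left_le, h.isCompl,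
    h.inf_le.trans le_sup_left⟩

lemma IsSplitting.eq_of_le_sup (h : IsSplitting U K V T) (hT : T ≤ U ⊔ K) : U = T := by
  refine le_antisymm h.le_right ?_
  calc T = (U ⊔ K) ⊓ T := (inf_eq_right.2 hT).symm
    _ = U ⊔ K ⊓ T := sup_inf_assoc_of_le K h.le_right
    _ ≤ U := sup_le le_rfl h.inf_le

lemma IsSplitting.dual (hV : V ≤ K) (hVT : IsCompl V T) : IsSplitting K.dualAnnihilator
    T.dualAnnihilator T.dualAnnihilator V.dualAnnihilator := by
  have hcompl := Subspace.isCompl_dualAnnihilator hVT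
  exact ⟨Submodule.dualAnnihilator_anti hV, le_rfl, hcompl.symm,
    hcompl.symm.inf_eq_bot.trans_le bot_le⟩

variable [FiniteDimensional F W]

lemma IsSplitting.isConnectedHom_of_right (hF : ∃ x : F, x ≠ 0 ∧ x ≠ 1)
    (hQ : ∀ r < finrank F V, SplittingsConnected F W r)
    (h : IsSplitting U K V T) (base : IsConnectedHom
      (Subgroup.inclusion (relGL_mono le_rfl h.left_le : relGL T V ≤ relGL T K)) (finrank F V)) :
    IsConnectedHom (Subgroup.inclusion h.relGL_le) (finrank F V) := by
  generalize hk : finrank F T - finrank F U = k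
  induction k generalizing U with
  | zero =>
    obtain rfl : U = T := Submodule.eq_of_le_of_finrank_le h.le_right (by lia)
    exact base
  | succ k ih =>
    by_cases hT : T ≤ U ⊔ K
    · obtain rfl := h.eq_of_le_sup hT
      exact base
    · obtain ⟨t, htT, ht⟩ := Set.not_subset.1 hT
      have htU : t ∉ U := fun h => ht (Submodule.mem_sup_left h)
      have hrank : finrank F ↥(U ⊔ F ∙ t) = finrank F U + 1 :=
        Submodule.finrank_sup_span_singleton htU
      have hstep := isConnectedHom_sup_span_of_notMem hF ht
        ((add_comm _ _).trans h.finrank_add_finrank) hQ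
      exact (ih (h.sup_span htT) base (by lia)).inclusion_trans hstep

/-- Passing to the dual space turns `relGL T V ≤ relGL T K` into
`relGL V.dualAnnihilator T.dualAnnihilator ≤ relGL K.dualAnnihilator T.dualAnnihilator`; enlarging
`K.dualAnnihilator` one line at a time now ends with an equality of groups. -/
theorem splittingsConnected {F : Type} [Field F] (hF : ∃ x : F, x ≠ 0 ∧ x ≠ 1) (r : ℕ) :
    ∀ (W : Type) [AddCommGroup W] [Module F W] [FiniteDimensional F W],
      SplittingsConnected F W r := by
  induction r using Nat.strong_induction_on with
  | _ r ih =>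
    rintro W _ _ _ U K V T h rfl
    refine h.isConnectedHom_of_right hF (fun s hs => ih s hs W) ?_
    have hrank : finrank F T.dualAnnihilator = finrank F V := by
      have hT := Subspace.finrank_add_finrank_dualAnnihilator_eq T
      have hVT := Submodule.finrank_add_eq_of_isCompl h.isCompl
      lia
    have hdual := (IsSplitting.dual h.left_le h.isCompl).isConnectedHom_of_right hF
      (fun s hs => ih s (hs.trans_eq hrank) (Dual F W))
      (isConnectedHom_inclusion_of_ge le_rfl)
    rw [hrank] at hdual
    exact hdual.of_comap contragredient_bijective (comap_contragredient_relGL _ _)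
      (comap_contragredient_relGL _ _) _ _

end Induction

section SubquotientHomology

variable {R : Type u} [Ring R] {S : ShortComplex (ModuleCat.{v} R)}

/-- The homology of a short complex of modules, as the quotient of any submodule `Z` equal to the
cycles by any submodule `B` equal to the boundaries. -/
noncomputable def subquotientHomology (Z : Submodule R S.X₂) (hZ : LinearMap.ker S.g.hom = Z)
    (B : Submodule R Z) (hB : (LinearMap.range S.f.hom).comap Z.subtype = B) :
    S.LeftHomologyData :=
  have hi : ModuleCat.ofHom Z.subtype ≫ S.g = 0 :=
    ModuleCat.hom_ext (LinearMap.ext fun z => hZ.ge z.2)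
  have : Mono (ModuleCat.ofHom Z.subtype) :=
    (ModuleCat.mono_iff_injective _).2 Subtype.val_injective
  have : Epi (ModuleCat.ofHom B.mkQ) := (ModuleCat.epi_iff_surjective _).2 B.mkQ_surjective
  let hlim : IsLimit (KernelFork.ofι (ModuleCat.ofHom Z.subtype) hi) :=
    ((ShortComplex.moduleCat_exact_iff_range_eq_ker (.mk _ _ hi)).2
      (Z.range_subtype.trans hZ.symm)).fIsKernel
  let f' := hlim.lift (KernelFork.ofι _ S.zero)
  have hf' : Z.subtype ∘ₗ f'.hom = S.f.hom :=
    congrArg ModuleCat.Hom.hom (Fork.IsLimit.lift_ι hlim)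
  have hrange : LinearMap.range f'.hom = LinearMap.ker B.mkQ := by
    rw [B.ker_mkQ, ← hB, ← hf', LinearMap.range_comp,
      Submodule.comap_map_eq_of_injective Subtype.val_injective]
  have hπ : f' ≫ ModuleCat.ofHom B.mkQ = 0 :=
    ModuleCat.hom_ext (LinearMap.range_le_ker_iff.1 hrange.le)
  { K := ModuleCat.of R Z
    H := ModuleCat.of R (Z ⧸ B)
    i := ModuleCat.ofHom Z.subtype
    π := ModuleCat.ofHom B.mkQ
    wi := hi
    hi := hlim
    wπ := hπ
    hπ := ((ShortComplex.moduleCat_exact_iff_range_eq_ker (.mk _ _ hπ)).2 hrange).gIsCokernel }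

end SubquotientHomology

section InhomogeneousChains

variable (G : Type) [Group G] (n : ℕ)

/-- The short complex of inhomogeneous integral chains in degrees `n + 1`, `n`, `n - 1`. -/
noncomputable abbrev chainsSc : ShortComplex (ModuleCat.{0} ℤ) :=
  (groupHomology.inhomogeneousChains (Rep.trivial ℤ G ℤ)).sc n

lemma inhomogeneousChains_d_eq :
    ((groupHomology.inhomogeneousChains (Rep.trivial ℤ G ℤ)).d (n + 1) n).hom =
      GroupHomologyBar.d G ℤ n := by
  refine Finsupp.lhom_ext fun g a => ?_
  rw [groupHomology.inhomogeneousChains.d_def, GroupHomologyBar.d_single]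
  exact groupHomology.inhomogeneousChains.d_single (A := Rep.trivial ℤ G ℤ) n g a

lemma range_chainsSc_f : LinearMap.range (chainsSc G n).f.hom =
    LinearMap.range (GroupHomologyBar.d G ℤ n) := by
  rw [← inhomogeneousChains_d_eq]
  have (j : ℕ) (hj : (ComplexShape.down ℕ).prev n = j) : LinearMap.range (chainsSc G n).f.hom =
      LinearMap.range ((groupHomology.inhomogeneousChains (Rep.trivial ℤ G ℤ)).d j n).hom := by
    subst hj
    rfl
  exact this _ (ChainComplex.prev ℕ n)

lemma ker_chainsSc_g : LinearMap.ker (chainsSc G n).g.hom = GroupHomologyBar.cycles G ℤ n := by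
  have (j : ℕ) (hj : (ComplexShape.down ℕ).next n = j) : LinearMap.ker (chainsSc G n).g.hom =
      LinearMap.ker ((groupHomology.inhomogeneousChains (Rep.trivial ℤ G ℤ)).d n j).hom := by
    subst hj
    rfl
  cases n with
  | zero =>
    rw [this 0 ChainComplex.next_nat_zero, shape _ _ _ (by simp)]
    exact LinearMap.ker_zero
  | succ n =>
    rw [this n (ChainComplex.next_nat_succ n), inhomogeneousChains_d_eq]
    rfl

/-- The homology groups of the bar complex compute the homology of the inhomogeneous chains. -/
noncomputable def barHomologyData : (chainsSc G n).LeftHomologyData :=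
  subquotientHomology (GroupHomologyBar.cycles G ℤ n) (ker_chainsSc_g G n)
    (GroupHomologyBar.boundaries G ℤ n) (congrArg _ (range_chainsSc_f G n))

variable {G} {H : Type} [Group H] (f : G →* H)

lemma chainsMap_f_eq : ((groupHomology.chainsMap f (trivialMap f)).f n).hom =
    GroupHomologyBar.chainsMap ℤ f n := by
  refine Finsupp.lhom_ext fun g a => ?_
  rw [GroupHomologyBar.chainsMap_single]
  exact groupHomology.chainsMap_f_single f (trivialMap f) n g a

/-- The chain map between inhomogeneous chains over `f`, in degrees `n + 1`, `n`, `n - 1`. -/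
noncomputable abbrev chainsScMap : chainsSc G n ⟶ chainsSc H n :=
  (shortComplexFunctor _ _ n).map (groupHomology.chainsMap f (trivialMap f))

/-- The induced map on the homology of the bar complex is induced by the chain map between
inhomogeneous chains. -/
noncomputable def barHomologyMapData : ShortComplex.LeftHomologyMapData
    (chainsScMap n f) (barHomologyData G n) (barHomologyData H n) :=
  let φK : (barHomologyData G n).K ⟶ (barHomologyData H n).K :=
    (ModuleCat.ofHom (GroupHomologyBar.cyclesMap ℤ f n) :)
  have hi : φK ≫ (barHomologyData H n).i = (barHomologyData G n).i ≫ (chainsScMap n f).τ₂ :=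
    ModuleCat.hom_ext (LinearMap.ext fun z => (LinearMap.congr_fun (chainsMap_f_eq n f) z.1).symm)
  { φK := φK
    φH := (ModuleCat.ofHom (GroupHomologyBar.inducedMap ℤ f n) :)
    commi := hi
    commf' := by
      rw [← cancel_mono (barHomologyData H n).i, Category.assoc, Category.assoc, hi,
        ShortComplex.LeftHomologyData.f'_i_assoc, ShortComplex.LeftHomologyData.f'_i,
        ShortComplex.Hom.comm₁₂]
    commπ := rfl }

lemma barHomologyMapData_φH_eq : (barHomologyMapData n f).φH =
    (barHomologyData G n).homologyIso.inv ≫ ShortComplex.homologyMap (chainsScMap n f) ≫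
      (barHomologyData H n).homologyIso.hom :=
  (Iso.eq_inv_comp _).2 (barHomologyMapData n f).homologyMap_comm.symm

variable {n f} {m : ℕ}

lemma IsConnectedHom.bijective_inducedMap (hf : IsConnectedHom f m) (hn : n < m) :
    Function.Bijective (GroupHomologyBar.inducedMap ℤ f n) := by
  have : IsIso (ShortComplex.homologyMap (chainsScMap n f)) := hf.1 n hn
  have : IsIso (barHomologyMapData n f).φH := by
    rw [barHomologyMapData_φH_eq]
    infer_instance
  exact (ConcreteCategory.isIso_iff_bijective _).1 this

lemma IsConnectedHom.surjective_inducedMap (hf : IsConnectedHom f m) (hn : n ≤ m) :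
    Function.Surjective (GroupHomologyBar.inducedMap ℤ f n) := by
  have : Epi (ShortComplex.homologyMap (chainsScMap n f)) := hf.epi hn
  have : Epi (barHomologyMapData n f).φH := by
    rw [barHomologyMapData_φH_eq]
    infer_instance
  exact (ModuleCat.epi_iff_surjective _).1 this

end InhomogeneousChains

section Units

variable {M N : Type*} [Monoid M] [Monoid N] {φ : M →* N}

lemma unitsMap_injective (hφ : Function.Injective φ) : Function.Injective (Units.map φ) :=
  fun _ _ h => Units.ext (hφ (congrArg Units.val h))

lemma mem_range_unitsMap_iff (hφ : Function.Injective φ) {u : Nˣ} :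
    u ∈ (Units.map φ).range ↔ u.1 ∈ Set.range φ ∧ u⁻¹.1 ∈ Set.range φ := by
  refine ⟨?_, fun ⟨⟨a, ha⟩, ⟨b, hb⟩⟩ => ⟨⟨a, b, hφ ?_, hφ ?_⟩, Units.ext ha⟩⟩
  · rintro ⟨a, rfl⟩
    exact ⟨⟨a.1, rfl⟩, ⟨a⁻¹.1, rfl⟩⟩
  · rw [map_mul, ha, hb, u.mul_inv, map_one]
  · rw [map_mul, ha, hb, u.inv_mul, map_one]

end Units

/-! ### Stabilization of matrix groups -/

section Matrices

open scoped Matrix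

lemma IsConnectedHom.of_range {G H : Type} [Group G] [Group H] {f : G →* H} {m : ℕ}
    (hf : Function.Injective f)
    (h : IsConnectedHom (Subgroup.inclusion (le_top : f.range ≤ ⊤)) m) : IsConnectedHom f m :=
  h.of_square (α := f.rangeRestrict) (β := (Subgroup.topEquiv.symm : H ≃* _).toMonoidHom)
    ⟨f.rangeRestrict_injective_iff.2 hf, f.rangeRestrict_surjective⟩
    Subgroup.topEquiv.symm.bijective rfl

variable (F : Type) [Field F] (n : ℕ)

lemma diagBlockHom_injective : Function.Injective (diagBlockHom F n) := fun A B h => by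
  ext i j
  simpa [diagBlockHom] using congrFun₂ h i.castSucc j.castSucc

variable {F n} in
lemma mem_range_diagBlockHom_iff {M : Matrix (Fin (n + 1)) (Fin (n + 1)) F} :
    M ∈ Set.range (diagBlockHom F n) ↔
      (∀ i, M i (Fin.last n) = (1 : Matrix _ _ F) i (Fin.last n)) ∧
        ∀ j, M (Fin.last n) j = (1 : Matrix _ _ F) (Fin.last n) j := by
  have hne (i : Fin n) : Fin.last n ≠ i.castSucc := (Fin.castSucc_lt_last i).ne'
  constructor
  · rintro ⟨A, rfl⟩
    exact ⟨Fin.lastCases (by simp [diagBlockHom]) (by simp [diagBlockHom]),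
      Fin.lastCases (by simp [diagBlockHom]) (by simp [diagBlockHom, hne])⟩
  · rintro ⟨hcol, hrow⟩
    refine ⟨M.submatrix Fin.castSucc Fin.castSucc, ?_⟩
    ext i j
    cases i using Fin.lastCases <;> cases j using Fin.lastCases <;>
      simp [diagBlockHom, hcol, hrow, hne]

/-- Invertible matrices as linear automorphisms of the space of column vectors. -/
noncomputable def matrixAut : GL (Fin n) F ≃* ((Fin n → F) ≃ₗ[F] (Fin n → F)) :=
  Matrix.GeneralLinearGroup.toLin.trans (LinearMap.GeneralLinearGroup.generalLinearEquiv F _)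

variable {F n} in
lemma matrixAut_apply (g : GL (Fin n) F) (v : Fin n → F) : matrixAut F n g v = g.1.mulVec v := rfl

/-- The line spanned by the last standard basis vector. -/
noncomputable def lastLine : Submodule F (Fin (n + 1) → F) := F ∙ Pi.single (Fin.last n) 1

/-- The hyperplane of vectors with vanishing last coordinate. -/
def lastHyperplane : Submodule F (Fin (n + 1) → F) := LinearMap.ker (LinearMap.proj (Fin.last n))

variable {F n} in
lemma mem_lastHyperplane {v : Fin (n + 1) → F} : v ∈ lastHyperplane F n ↔ v (Fin.last n) = 0 :=
  Iff.rfl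

lemma single_last_ne_zero : (Pi.single (Fin.last n) 1 : Fin (n + 1) → F) ≠ 0 :=
  Pi.single_ne_zero_iff.2 one_ne_zero

lemma isSplitting_lastLine : IsSplitting (lastLine F n) ⊤ (lastHyperplane F n) (lastLine F n) := by
  refine ⟨le_rfl, le_top, Dual.isCompl_ker_of_disjoint_of_ne_bot ?_ ?_ ?_, inf_le_right⟩
  · exact fun h => by simpa using DFunLike.congr_fun h (Pi.single (Fin.last n) 1)
  · exact (Submodule.disjoint_span_singleton' (single_last_ne_zero F n)).2 (by simp)
  · exact Submodule.span_singleton_eq_bot.not.2 (single_last_ne_zero F n)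

lemma finrank_lastHyperplane : finrank F (lastHyperplane F n) = n := by
  have h := Submodule.finrank_add_eq_of_isCompl (isSplitting_lastLine F n).isCompl
  rw [lastLine, finrank_span_singleton (single_last_ne_zero F n), finrank_fin_fun] at h
  lia

variable {F n}

lemma matrixAut_mem_relGL_iff {g : GL (Fin (n + 1)) F} :
    matrixAut F _ g ∈ relGL (lastLine F n) (lastHyperplane F n) ↔
      g.1 ∈ Set.range (diagBlockHom F n) := by
  rw [mem_range_diagBlockHom_iff]
  refine and_congr ⟨fun h i => ?_, fun h u hu => ?_⟩ ⟨fun h j => ?_, fun h w => ?_⟩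
  · have hcol := congrFun (h _ (Submodule.mem_span_singleton_self _)) i
    rwa [matrixAut_apply, Matrix.mulVec_single_one, Pi.single_apply, ← Matrix.one_apply] at hcol
  · obtain ⟨c, rfl⟩ := Submodule.mem_span_singleton.1 hu
    ext i
    rw [map_smul, matrixAut_apply, Matrix.mulVec_single_one, Pi.smul_apply, Pi.smul_apply,
      Pi.single_apply, ← Matrix.one_apply, ← h i]
    rfl
  · have hrow := h (Pi.single j 1)
    rw [mem_lastHyperplane, matrixAut_apply, Pi.sub_apply, Matrix.mulVec_single_one, sub_eq_zero,
      Pi.single_apply, ← Matrix.one_apply] at hrow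
    exact hrow
  · rw [mem_lastHyperplane, matrixAut_apply, Pi.sub_apply, sub_eq_zero]
    calc g.1.mulVec w (Fin.last n) = (1 : Matrix _ _ F).mulVec w (Fin.last n) :=
          congrArg (· ⬝ᵥ w) (funext h)
      _ = w (Fin.last n) := by rw [Matrix.one_mulVec]

lemma comap_matrixAut_relGL :
    (relGL (lastLine F n) (lastHyperplane F n)).comap (matrixAut F _).toMonoidHom =
      (glStab F n).range := by
  ext g
  refine Iff.trans ?_ (mem_range_unitsMap_iff (diagBlockHom_injective F n)).symm
  rw [← matrixAut_mem_relGL_iff, ← matrixAut_mem_relGL_iff, map_inv, inv_mem_iff, and_self]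
  rfl

lemma relGL_bot_top {W : Type} [AddCommGroup W] [Module F W] :
    relGL (⊥ : Submodule F W) ⊤ = ⊤ :=
  eq_top_iff.2 fun g _ => ⟨fun u hu => by rw [(Submodule.mem_bot F).1 hu, map_zero],
    fun _ => trivial⟩

theorem isConnectedHom_glStab (hF : ∃ x : F, x ≠ 0 ∧ x ≠ 1) (n : ℕ) :
    IsConnectedHom (glStab F n) n := by
  have hline : IsConnectedHom (Subgroup.inclusion (isSplitting_lastLine F n).relGL_le) n :=
    splittingsConnected hF n _ (isSplitting_lastLine F n) (finrank_lastHyperplane F n)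
  have hrank : finrank F (⊥ : Submodule F (Fin (n + 1) → F)) + (n + 1) =
      finrank F ↥(⊥ ⊔ ⊤ : Submodule F (Fin (n + 1) → F)) := by
    rw [finrank_bot, zero_add, bot_sup_eq, finrank_top, finrank_fin_fun]
  have hsup := isConnectedHom_sup_span_of_mem Submodule.mem_top (single_last_ne_zero F n) hrank
    fun r _ => splittingsConnected hF r _
  have heq : IsConnectedHom (Subgroup.inclusion (relGL_mono (bot_sup_eq _).le le_rfl :
    relGL (lastLine F n) ⊤ ≤ relGL (⊥ ⊔ lastLine F n) ⊤)) n :=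
    isConnectedHom_inclusion_of_ge (by rw [bot_sup_eq])
  have hrange : IsConnectedHom (Subgroup.inclusion (le_top : (glStab F n).range ≤ ⊤)) n :=
    (hline.inclusion_trans (heq.inclusion_trans hsup)).of_comap (matrixAut F _).bijective
      comap_matrixAut_relGL (by rw [relGL_bot_top, Subgroup.comap_top]) le_top _
  exact hrange.of_range (unitsMap_injective (diagBlockHom_injective F n))

end Matrices

end GLStability

open GroupHomologyBar in
/-- Homological stability for the general linear groups over a field other than `𝔽₂`:
the stabilization map `GL_n(F) → GL_{n+1}(F)`, `A ↦ diag(A,1)`, induces an isomorphism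
on integral group homology `H_d` for `d ≤ n - 1` and a surjection for `d = n`. -/
theorem GL_homology_stability (F : Type) [Field F] (hF : ∃ x : F, x ≠ 0 ∧ x ≠ 1)
    (n : ℕ) (hn : 1 ≤ n) :
    (∀ d : ℕ, d ≤ n - 1 → Function.Bijective (inducedMap ℤ (glStab F n) d)) ∧
    Function.Surjective (inducedMap ℤ (glStab F n) n) := by
  have h := GLStability.isConnectedHom_glStab hF n
  exact ⟨fun d hd => h.bijective_inducedMap (by lia), h.surjective_inducedMap le_rfl⟩
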